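/- Let Ω ⊂ ℝ² be a bounded, open, connected set with Lipschitz boundary and let u ∈ W^{1,1}(Ω;S¹). Then for every Borel set E ⊆ Ω one has 𝒜**(u,E) = ∫_E √(1 + |∇u|²) dx; in particular, E ↦ 𝒜**(u,E) is a Borel measure on Ω absolutely continuous with respect to Lebesgue measure. -/

import Mathlib

open MeasureTheory Metric Filter Set
open scoped ENNReal NNReal Topology Classical

noncomputable section

abbrev R2 := EuclideanSpace ℝ (Fin 2)

/-- `Ω ⊂ ℝ²` has Lipschitz boundary: near every boundary point, after a rigid motion,
`Ω` coincides with the open region strictly above the graph of a Lipschitz function. -/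
def HasLipschitzBoundary (Ω : Set R2) : Prop :=
  ∀ p ∈ frontier Ω, ∃ r : ℝ, 0 < r ∧ ∃ (f : R2 ≃ᵢ R2) (γ : ℝ → ℝ) (L : ℝ≥0),
    LipschitzWith L γ ∧ ∀ x ∈ Metric.ball p r, (x ∈ Ω ↔ γ (f x 0) < f x 1)

/-- `G` is the weak (distributional) gradient of `u` on `Ω`:
`∫_Ω u_i ∂_j φ = -∫_Ω G_{ij} φ` for all test functions `φ ∈ C_c^∞(Ω)`. -/
def IsWeakGradient (Ω : Set R2) (u : R2 → R2) (G : R2 → Matrix (Fin 2) (Fin 2) ℝ) : Prop :=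
  ∀ φ : R2 → ℝ, ContDiff ℝ (⊤ : ℕ∞) φ → HasCompactSupport φ → tsupport φ ⊆ Ω →
    ∀ i j : Fin 2,
      (∫ x in Ω, u x i * fderiv ℝ φ x (EuclideanSpace.single j 1)) =
        - ∫ x in Ω, G x i j * φ x

/-- `u ∈ W^{1,1}(Ω;ℝ²)` with weak gradient `G`. -/
def MemW11 (Ω : Set R2) (u : R2 → R2) (G : R2 → Matrix (Fin 2) (Fin 2) ℝ) : Prop :=
  IntegrableOn u Ω ∧ (∀ i j : Fin 2, IntegrableOn (fun x => G x i j) Ω) ∧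
    IsWeakGradient Ω u G

/-- `|u| = 1` a.e. in `Ω`. -/
def SphereValued (Ω : Set R2) (u : R2 → R2) : Prop :=
  ∀ᵐ x ∂(volume.restrict Ω), ‖u x‖ = 1

/-- Frobenius norm of a `2×2` matrix. -/
def frob (M : Matrix (Fin 2) (Fin 2) ℝ) : ℝ :=
  Real.sqrt (∑ i, ∑ j, (M i j) ^ 2)

/-- Jacobian matrix of a map `v : ℝ² → ℝ²`. -/
def jacobianMatrix (v : R2 → R2) (x : R2) : Matrix (Fin 2) (Fin 2) ℝ :=
  Matrix.of fun i j => fderiv ℝ v x (EuclideanSpace.single j 1) i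

/-- Classical graph area `A(v,A) = ∫_A √(1 + |∇v|² + (Jv)²)` of a `C¹` map. -/
def classicalArea (A : Set R2) (v : R2 → R2) : ℝ≥0∞ :=
  ∫⁻ x in A, ENNReal.ofReal
    (Real.sqrt (1 + (∑ i, ∑ j, (jacobianMatrix v x i j) ^ 2) + (jacobianMatrix v x).det ^ 2))

/-- `L¹`-relaxed area functional `𝒜(u,A)`. -/
def relaxedArea (u : R2 → R2) (A : Set R2) : ℝ≥0∞ :=
  sInf { a : ℝ≥0∞ | ∃ v : ℕ → R2 → R2,
    (∀ k, ContDiffOn ℝ 1 (v k) A) ∧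
    (∀ k, IntegrableOn (fun x => v k x - u x) A) ∧
    Tendsto (fun k => ∫ x in A, ‖v k x - u x‖) atTop (nhds 0) ∧
    a = Filter.liminf (fun k => classicalArea A (v k)) atTop }

/-- `λ_u = (1/2)(u₁ ∇^⊥u₂ − u₂ ∇^⊥u₁)`, computed from the weak gradient `G`. -/
def lambdaVec (u : R2 → R2) (G : R2 → Matrix (Fin 2) (Fin 2) ℝ) (x : R2) : Fin 2 → ℝ :=
  ![ (1 / 2) * (-(u x 0) * G x 1 1 + u x 1 * G x 0 1),
     (1 / 2) * (u x 0 * G x 1 0 - u x 1 * G x 0 0) ]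

/-- Distributional Jacobian pairing `⟨Det(∇u), φ⟩ = ∫_Ω λ_u · ∇φ`. -/
def detPairing (Ω : Set R2) (u : R2 → R2) (G : R2 → Matrix (Fin 2) (Fin 2) ℝ)
    (φ : R2 → ℝ) : ℝ :=
  ∫ x in Ω, ∑ j, lambdaVec u G x j * fderiv ℝ φ x (EuclideanSpace.single j 1)

/-- `φ ∈ Lip₀(Ω)`: Lipschitz on `cl(Ω)` and vanishing on `∂Ω`. -/
def MemLip0 (Ω : Set R2) (φ : R2 → ℝ) : Prop :=
  (∃ L : ℝ≥0, LipschitzOnWith L φ (closure Ω)) ∧ ∀ p ∈ frontier Ω, φ p = 0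

/-- Admissible test functions for the flat norm: Lipschitz constant `≤ L` on `cl(Ω)`,
vanishing on `Z`, and bounded by `1` on `cl(Ω)`. -/
def FlatAdmissible (Ω Z : Set R2) (L : ℝ≥0) (φ : R2 → ℝ) : Prop :=
  LipschitzOnWith L φ (closure Ω) ∧ (∀ p ∈ Z, φ p = 0) ∧ ∀ p ∈ closure Ω, |φ p| ≤ 1

/-- Flat norm of a functional `F`, with vanishing condition on the set `Z`. -/
def flatNormOn (Ω Z : Set R2) (L : ℝ≥0) (F : (R2 → ℝ) → ℝ) : ℝ≥0∞ :=
  ⨆ φ ∈ {φ : R2 → ℝ | FlatAdmissible Ω Z L φ}, ENNReal.ofReal (F φ)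

/-- Flat norm of a functional `F` on `Lip₀(Ω)`; `L = 2` gives `‖·‖_{flat,α}` (α = 1/2),
`L = 1` gives `‖·‖_flat`. -/
def flatNorm (Ω : Set R2) (L : ℝ≥0) (F : (R2 → ℝ) → ℝ) : ℝ≥0∞ :=
  flatNormOn Ω (frontier Ω) L F

/-- `d̄_Ω(x,y) = min{|x−y|, dist(x,∂Ω) + dist(y,∂Ω)}`. -/
def dbar (Ω : Set R2) (x y : R2) : ℝ :=
  min (dist x y) (Metric.infDist x (frontier Ω) + Metric.infDist y (frontier Ω))

/-- Countably subadditive interior envelope `𝒜**(u,V)` (relative to `Ω`). -/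
def envA (u : R2 → R2) (Ω V : Set R2) : ℝ≥0∞ :=
  sInf { a : ℝ≥0∞ | ∃ A : ℕ → Set R2,
    (∀ k, IsOpen (A k) ∧ A k ⊆ Ω) ∧ V ⊆ ⋃ k, A k ∧ a = ∑' k, relaxedArea u (A k) }

/-- Property `(P_f)` for a finite family of pairs of points of `cl(Ω)`. -/
def SatisfiesPf (Ω : Set R2) {n : ℕ} (x y : Fin n → R2) : Prop :=
  (∀ k, (x k ∈ Ω ∧ y k ∈ frontier Ω ∧ dist (x k) (y k) = Metric.infDist (x k) (frontier Ω)) ∨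
        (y k ∈ Ω ∧ x k ∈ frontier Ω ∧ dist (x k) (y k) = Metric.infDist (y k) (frontier Ω))) ∧
  ∀ i j, x i ∈ Ω → y j ∈ Ω → x i ≠ y j

/-- The points of the family `x, y` lying in `Ω` are distinct and three by three
not collinear. -/
def InteriorPointsGeneric (Ω : Set R2) {n : ℕ} (x y : Fin n → R2) : Prop :=
  (∀ a b : Fin n ⊕ Fin n, Sum.elim x y a ∈ Ω → Sum.elim x y b ∈ Ω → a ≠ b →
    Sum.elim x y a ≠ Sum.elim x y b) ∧
  ∀ a b c : Fin n ⊕ Fin n, Sum.elim x y a ∈ Ω → Sum.elim x y b ∈ Ω → Sum.elim x y c ∈ Ω →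
    a ≠ b → a ≠ c → b ≠ c →
    ¬ Collinear ℝ ({Sum.elim x y a, Sum.elim x y b, Sum.elim x y c} : Set R2)

/-- `ι(w₁,w₂) = (w₁,−w₂)`. -/
def conjPt (w : R2) : R2 := (WithLp.equiv 2 (Fin 2 → ℝ)).symm ![w 0, -(w 1)]

/-- `u` is a (positive/negative) vortex around the points of the family lying in `Ω`:
the closed discs of radii `ρ` are contained in `Ω` and pairwise disjoint,
`u(z) = (z−x_i)/|z−x_i|` on `B_{ρ}(x_i)` and `u(z) = ι((z−y_j)/|z−y_j|)` on `B_{ρ}(y_j)`. -/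
def VortexAt (Ω : Set R2) (u : R2 → R2) {n : ℕ} (x y : Fin n → R2)
    (ρ : Fin n ⊕ Fin n → ℝ) : Prop :=
  (∀ a, Sum.elim x y a ∈ Ω → Metric.closedBall (Sum.elim x y a) (ρ a) ⊆ Ω) ∧
  (∀ a b, a ≠ b → Sum.elim x y a ∈ Ω → Sum.elim x y b ∈ Ω →
    Disjoint (Metric.closedBall (Sum.elim x y a) (ρ a))
      (Metric.closedBall (Sum.elim x y b) (ρ b))) ∧
  (∀ i, x i ∈ Ω → ∀ᵐ z ∂(volume.restrict (Metric.ball (x i) (ρ (Sum.inl i)))),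
    u z = ‖z - x i‖⁻¹ • (z - x i)) ∧
  (∀ i, y i ∈ Ω → ∀ᵐ z ∂(volume.restrict (Metric.ball (y i) (ρ (Sum.inr i)))),
    u z = conjPt (‖z - y i‖⁻¹ • (z - y i)))

/-- The energy `E(I_P, I_D, τ)` of a partition `{I_Dᶜ, I_D}` of `I` and an injection
`τ : I_D → I`. -/
def energy (Ω : Set R2) {n : ℕ} (x y : Fin n → R2) (ID : Finset (Fin n))
    (τ : Fin n → Fin n) : ℝ≥0∞ :=
  ((IDᶜ.filter fun k => x k ∈ Ω).card : ℝ≥0∞) +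
  (((Finset.univ \ ID.image τ).filter fun j => y j ∈ Ω).card : ℝ≥0∞) +
  2 * ∑ k ∈ ID, μH[1] (segment ℝ (y (τ k)) (x k) ∩ Ω)

namespace EnvA

open ContinuousLinearMap in
/-- bumps -/
def bump (k : ℕ) : ContDiffBump (0 : R2) where
  rIn := 1 / (2 * ((k : ℝ) + 1))
  rOut := 1 / ((k : ℝ) + 1)
  rIn_pos := by positivity
  rIn_lt_rOut := by
    apply one_div_lt_one_div_of_lt <;> nlinarith [(Nat.cast_nonneg k : (0:ℝ) ≤ k)]

def rho (k : ℕ) : R2 → ℝ := (bump k).normed volume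

variable {F : Type*} [NormedAddCommGroup F] [NormedSpace ℝ F]

/-- mollification -/
def moll (k : ℕ) (g : R2 → F) : R2 → F :=
  convolution (rho k) g (ContinuousLinearMap.lsmul ℝ ℝ) volume

lemma moll_def (k : ℕ) (g : R2 → F) (x : R2) : moll k g x = ∫ t, rho k t • g (x - t) := rfl

lemma moll_swap (k : ℕ) (g : R2 → F) (x : R2) : moll k g x = ∫ t, rho k (x - t) • g t := by
  unfold moll
  rw [convolution_lsmul_swap]

lemma rho_nonneg (k : ℕ) (x : R2) : 0 ≤ rho k x := (bump k).nonneg_normed x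
lemma rho_contDiff (k : ℕ) {n : ℕ∞} : ContDiff ℝ n (rho k) := (bump k).contDiff_normed
lemma rho_continuous (k : ℕ) : Continuous (rho k) := (bump k).continuous_normed
lemma rho_compact (k : ℕ) : HasCompactSupport (rho k) := (bump k).hasCompactSupport_normed
lemma rho_integral (k : ℕ) : ∫ x, rho k x = 1 := (bump k).integral_normed
lemma rho_integrable (k : ℕ) : Integrable (rho k) := (bump k).integrable_normed
lemma rho_tsupport (k : ℕ) : tsupport (rho k) = closedBall 0 (1 / ((k : ℝ) + 1)) :=
  (bump k).tsupport_normed_eq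
lemma rho_zero (k : ℕ) {x : R2} (hx : 1 / ((k : ℝ) + 1) < ‖x‖) : rho k x = 0 := by
  apply image_eq_zero_of_notMem_tsupport
  rw [rho_tsupport]
  simpa using hx

lemma rOut_tendsto : Tendsto (fun k => (bump k).rOut) atTop (𝓝 0) :=
  tendsto_one_div_add_atTop_nhds_zero_nat

lemma moll_ae [CompleteSpace F] {g : R2 → F} (hg : Integrable g) :
    ∀ᵐ x, Tendsto (fun k => moll k g x) atTop (𝓝 (g x)) := by
  refine ContDiffBump.ae_convolution_tendsto_right_of_locallyIntegrable (K := 2) rOut_tendsto ?_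
    hg.locallyIntegrable
  refine Eventually.of_forall fun k => ?_
  simp only [bump]
  apply le_of_eq
  field_simp

lemma moll_contDiff [CompleteSpace F] {g : R2 → F} (hg : Integrable g) (k : ℕ) {n : ℕ∞} :
    ContDiff ℝ n (moll k g) :=
  (rho_compact k).contDiff_convolution_left _ (rho_contDiff k) hg.locallyIntegrable

lemma moll_integrable {g : R2 → F} (hg : Integrable g) (k : ℕ) :
    Integrable (moll k g) :=
  (rho_integrable k).integrable_convolution _ hg

lemma moll_norm_le {g : R2 → F} (k : ℕ) (x : R2) :
    ‖moll k g x‖ ≤ moll k (fun x => ‖g x‖) x := by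
  rw [moll_def, moll_def]
  refine (norm_integral_le_integral_norm _).trans (le_of_eq ?_)
  congr 1; ext t
  rw [norm_smul, smul_eq_mul, Real.norm_of_nonneg (rho_nonneg k t)]

lemma moll_norm_le_const {g : R2 → F} (k : ℕ) (x : R2) {C : ℝ} (hC : ∀ x, ‖g x‖ ≤ C) :
    ‖moll k g x‖ ≤ C := by
  rw [moll_def]
  refine (norm_integral_le_of_norm_le ((rho_integrable k).mul_const C) ?_).trans ?_
  · refine Eventually.of_forall fun t => ?_
    rw [norm_smul, Real.norm_of_nonneg (rho_nonneg k t)]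
    exact mul_le_mul_of_nonneg_left (hC _) (rho_nonneg k t)
  · rw [integral_mul_const, rho_integral, one_mul]

lemma moll_integral {g : R2 → ℝ} (hg : Integrable g) (k : ℕ) :
    ∫ x, moll k g x = ∫ x, g x := by
  unfold moll
  rw [integral_convolution _ (rho_integrable k) hg, rho_integral]
  simp

/-- generalized dominated convergence -/
lemma moll_L1 [CompleteSpace F] {g : R2 → F} (hg : Integrable g) :
    Tendsto (fun k => ∫⁻ x, ‖moll k g x - g x‖ₑ) atTop (𝓝 0) := by
  set N : R2 → ℝ := fun x => ‖g x‖ with hN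
  have hNi : Integrable N := hg.norm
  -- Fatou
  set a : ℕ → R2 → ℝ := fun k x => N x + moll k N x - ‖moll k g x - g x‖
  have ha0 : ∀ k x, 0 ≤ a k x := fun k x => by
    have := moll_norm_le (g := g) k x
    have h2 := norm_sub_le (moll k g x) (g x)
    simp only [a, hN] at *
    linarith
  have hai : ∀ k, Integrable (a k) := fun k =>
    (hNi.add (moll_integrable hNi k)).sub ((moll_integrable hg k).sub hg).norm
  have hF := lintegral_liminf_le' (μ := (volume : Measure R2)) (u := atTop)
    (f := fun k x => ENNReal.ofReal (a k x)) (fun k => (hai k).aemeasurable.ennreal_ofReal)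
  have hlim : ∫⁻ x, liminf (fun k => ENNReal.ofReal (a k x)) atTop
      = ENNReal.ofReal (2 * ∫ x, N x) := by
    rw [← integral_const_mul, ofReal_integral_eq_lintegral_ofReal (hNi.const_mul 2)
      (Eventually.of_forall fun x => by positivity)]
    refine lintegral_congr_ae ?_
    filter_upwards [moll_ae hg, moll_ae hNi] with x h1 h2
    refine Tendsto.liminf_eq (ENNReal.tendsto_ofReal ?_)
    have := (h2.const_add (N x)).sub ((h1.sub_const (g x)).norm)
    simpa [two_mul] using this
  have hval : ∀ k, ∫⁻ x, ENNReal.ofReal (a k x)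
      = ENNReal.ofReal (2 * ∫ x, N x) - (∫⁻ x, ‖moll k g x - g x‖ₑ) := by
    intro k
    have hd : Integrable (fun x => ‖moll k g x - g x‖) := ((moll_integrable hg k).sub hg).norm
    have h3 := ofReal_integral_norm_eq_lintegral_enorm ((moll_integrable hg k).sub hg)
    simp only [Pi.sub_apply] at h3
    rw [← ofReal_integral_eq_lintegral_ofReal (hai k) (Eventually.of_forall (ha0 k))]
    have e1 : ∫ x, a k x = 2 * (∫ x, N x) - ∫ x, ‖moll k g x - g x‖ := by
      have : ∫ x, a k x = (∫ x, (N x + moll k N x)) - ∫ x, ‖moll k g x - g x‖ :=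
        integral_sub (hNi.add (moll_integrable hNi k)) hd
      rw [this, integral_add hNi (moll_integrable hNi k), moll_integral hNi]
      ring
    rw [e1, ENNReal.ofReal_sub _ (integral_nonneg fun x => norm_nonneg _), h3]
  rw [hlim] at hF
  simp_rw [hval] at hF
  set c := ENNReal.ofReal (2 * ∫ x, N x) with hc
  have hctop : c ≠ ⊤ := ENNReal.ofReal_ne_top
  have hcle : ∀ k, ∫⁻ x, ‖moll k g x - g x‖ₑ ≤ c := by
    intro k
    have : ∫⁻ x, ‖moll k g x - g x‖ₑ ≤ ∫⁻ x, ENNReal.ofReal (N x + moll k N x) := by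
      refine lintegral_mono fun x => ?_
      rw [← ofReal_norm]
      refine ENNReal.ofReal_le_ofReal ?_
      have := ha0 k x
      simp only [a] at this; linarith
    refine this.trans (le_of_eq ?_)
    have hsum : Integrable (fun x => N x + moll k N x) := hNi.add (moll_integrable hNi k)
    rw [← ofReal_integral_eq_lintegral_ofReal hsum
      (Eventually.of_forall fun x => ?_)]
    · rw [integral_add hNi (moll_integrable hNi k), moll_integral hNi, hc, two_mul]
    · have := (norm_nonneg _).trans (moll_norm_le (g := g) k x)
      have h2 := norm_nonneg (g x)
      simp only [hN, Pi.zero_apply] at *; linarith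
  have h0 : limsup (fun k => ∫⁻ x, ‖moll k g x - g x‖ₑ) atTop ≤ 0 := by
    rw [ENNReal.liminf_const_sub _ _ hctop] at hF
    have h1 : limsup (fun k => ∫⁻ x, ‖moll k g x - g x‖ₑ) atTop ≤ c := by
      exact limsup_le_of_le (by isBoundedDefault) (Eventually.of_forall hcle)
    by_contra hcon
    push Not at hcon
    have : c - limsup (fun k => ∫⁻ x, ‖moll k g x - g x‖ₑ) atTop < c :=
      ENNReal.sub_lt_self hctop (fun h => by rw [h] at h1; exact absurd (h1.trans_lt' hcon) (lt_irrefl _)) hcon.ne'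
    exact absurd hF (not_le.2 this)
  exact tendsto_of_le_liminf_of_limsup_le (zero_le) h0

end EnvA

namespace EnvA

/-- standard basis vector -/
abbrev ee (j : Fin 2) : R2 := EuclideanSpace.single j (1 : ℝ)

def col (G : R2 → Matrix (Fin 2) (Fin 2) ℝ) (j : Fin 2) (x : R2) : R2 :=
  WithLp.toLp 2 (fun i => G x i j)

@[simp] lemma col_apply (G : R2 → Matrix (Fin 2) (Fin 2) ℝ) (j : Fin 2) (x : R2) (i : Fin 2) :
    col G j x i = G x i j := rfl

structure Good (Ω : Set R2) (u : R2 → R2) (G : R2 → Matrix (Fin 2) (Fin 2) ℝ) : Prop where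
  isOpen : IsOpen Ω
  bdd : Bornology.IsBounded Ω
  um : Measurable u
  u1 : ∀ x ∈ Ω, ‖u x‖ = 1
  u0 : ∀ x, x ∉ Ω → u x = 0
  Gm : ∀ i j, Measurable (fun x => G x i j)
  G0 : ∀ x, x ∉ Ω → G x = 0
  Gi : ∀ i j, Integrable (fun x => G x i j)
  wk : IsWeakGradient Ω u G

variable {Ω : Set R2} {u : R2 → R2} {G : R2 → Matrix (Fin 2) (Fin 2) ℝ}

lemma Good.norm_le (h : Good Ω u G) (x : R2) : ‖u x‖ ≤ 1 := by
  by_cases hx : x ∈ Ω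
  · exact (h.u1 x hx).le
  · simp [h.u0 x hx]

lemma Good.vol (h : Good Ω u G) : volume Ω < ⊤ := h.bdd.measure_lt_top

lemma Good.ui (h : Good Ω u G) : Integrable u := by
  have : IntegrableOn u Ω :=
    Measure.integrableOn_of_bounded h.vol.ne h.um.aestronglyMeasurable
      (M := 1) (Eventually.of_forall h.norm_le)
  exact (integrableOn_iff_integrable_of_support_subset
    (fun x hx => by by_contra h'; exact hx (h.u0 x h'))).1 this

lemma integrable_toLp {ι : Type*} [Fintype ι] {f : R2 → EuclideanSpace ℝ ι}
    (hf : ∀ i, Integrable (fun x => f x i)) : Integrable f := by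
  have h1 : Integrable (fun x => (WithLp.ofLp (f x) : ι → ℝ)) := Integrable.of_eval hf
  exact (PiLp.continuousLinearEquiv 2 ℝ (fun _ : ι => ℝ)).symm.toContinuousLinearMap.integrable_comp h1

lemma Good.ci (h : Good Ω u G) (j : Fin 2) : Integrable (col G j) :=
  integrable_toLp fun i => h.Gi i j

lemma integral_coord {ι : Type*} [Fintype ι] {f : R2 → EuclideanSpace ℝ ι} (hf : Integrable f)
    (i : ι) : (∫ x, f x) i = ∫ x, f x i :=
  ((EuclideanSpace.proj i : EuclideanSpace ℝ ι →L[ℝ] ℝ).integral_comp_comm hf).symm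

lemma Good.wk' (h : Good Ω u G) {φ : R2 → ℝ} (hφ : ContDiff ℝ (⊤ : ℕ∞) φ)
    (hc : HasCompactSupport φ) (hs : tsupport φ ⊆ Ω) (i j : Fin 2) :
    ∫ x, u x i * fderiv ℝ φ x (ee j) = - ∫ x, G x i j * φ x := by
  have := h.wk φ hφ hc hs i j
  rwa [setIntegral_eq_integral_of_forall_compl_eq_zero,
    setIntegral_eq_integral_of_forall_compl_eq_zero] at this
  · intro x hx; simp [h.G0 x hx]
  · intro x hx; simp [h.u0 x hx]

lemma moll_integrand {F : Type*} [NormedAddCommGroup F] [NormedSpace ℝ F]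
    {g : R2 → F} (hg : Integrable g) (k : ℕ) (x : R2) :
    Integrable (fun t => rho k (x - t) • g t) :=
  ((rho_compact k).convolutionExists_left (ContinuousLinearMap.lsmul ℝ ℝ)
    (rho_continuous k) hg.locallyIntegrable x).integrable_swap

lemma Good.moll_fderiv (h : Good Ω u G) (k : ℕ) (x : R2)
    (hx : closedBall x (1 / ((k : ℝ) + 1)) ⊆ Ω) (j : Fin 2) :
    fderiv ℝ (moll k u) x (ee j) = moll k (col G j) x := by
  have hd := (rho_compact k).hasFDerivAt_convolution_left (ContinuousLinearMap.lsmul ℝ ℝ)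
    (rho_contDiff k (n := 1)) h.ui.locallyIntegrable x
  have hex := ((rho_compact k).fderiv (𝕜 := ℝ)).convolutionExists_left
    ((ContinuousLinearMap.lsmul ℝ ℝ : ℝ →L[ℝ] R2 →L[ℝ] R2).precompL R2)
    ((rho_contDiff k (n := 1)).continuous_fderiv (by simp)) h.ui.locallyIntegrable x
  have hinteg := hex.integrable_swap
  have e1 : fderiv ℝ (moll k u) x (ee j) = ∫ t, fderiv ℝ (rho k) (x - t) (ee j) • u t := by
    have : fderiv ℝ (moll k u) x = _ := hd.fderiv
    rw [this, convolution_eq_swap, ContinuousLinearMap.integral_apply hinteg]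
    rfl
  have hinteg2 : Integrable (fun t => fderiv ℝ (rho k) (x - t) (ee j) • u t) := by
    exact hinteg.apply_continuousLinearMap (ee j)
  ext i
  rw [e1, moll_swap, integral_coord hinteg2, integral_coord (moll_integrand (h.ci j) k x)]
  set φ : R2 → ℝ := fun t => rho k (x - t) with hφ
  have hts : tsupport φ ⊆ closedBall x (1 / ((k : ℝ) + 1)) := by
    refine closure_minimal ?_ isClosed_closedBall
    intro t ht
    by_contra hcon
    apply ht
    simp only [hφ]
    apply rho_zero
    rw [mem_closedBall, not_le, dist_comm, dist_eq_norm] at hcon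
    exact hcon
  have hφs : ContDiff ℝ (⊤ : ℕ∞) φ := (rho_contDiff k).comp (contDiff_const.sub contDiff_id)
  have hw := h.wk' hφs (HasCompactSupport.of_support_subset_isCompact (isCompact_closedBall x _)
    (subset_closure.trans hts)) (hts.trans hx) i j
  have hfd : ∀ t, fderiv ℝ φ t (ee j) = - fderiv ℝ (rho k) (x - t) (ee j) := by
    intro t
    have h1 : HasFDerivAt (rho k) (fderiv ℝ (rho k) (x - t)) (x - t) :=
      ((rho_contDiff k (n := 1)).differentiable (by simp) _).hasFDerivAt
    have h2 : HasFDerivAt (fun t : R2 => x - t) (-(ContinuousLinearMap.id ℝ R2)) t := by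
      simpa using (hasFDerivAt_id t).const_sub x
    have := (h1.comp t h2).fderiv
    have h3 : fderiv ℝ φ t = (fderiv ℝ (rho k) (x - t)).comp (-(ContinuousLinearMap.id ℝ R2)) := this
    rw [h3]; simp
  simp_rw [hfd] at hw
  calc ∫ t, (fderiv ℝ (rho k) (x - t) (ee j) • u t) i
      = - ∫ t, u t i * - fderiv ℝ (rho k) (x - t) (ee j) := by
        rw [← integral_neg]; congr 1; ext t; simp; ring
    _ = ∫ t, (rho k (x - t) • col G j t) i := by
        rw [hw, neg_neg]; congr 1; ext t; simp [hφ]; ring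

lemma integrable_mul_of_tsupport {A : Set R2} (hA : IsOpen A) {φ f : R2 → ℝ} (hφ : Continuous φ)
    (hc : HasCompactSupport φ) (hs : tsupport φ ⊆ A) (hf : ContinuousOn f A) :
    Integrable (fun x => φ x * f x) := by
  have hcont : Continuous (fun x => φ x * f x) := by
    rw [continuous_iff_continuousAt]
    intro x
    by_cases hx : x ∈ tsupport φ
    · exact hφ.continuousAt.mul (hf.continuousAt (hA.mem_nhds (hs hx)))
    · have : (fun x => φ x * f x) =ᶠ[𝓝 x] fun _ => 0 := by
        filter_upwards [notMem_tsupport_iff_eventuallyEq.1 hx] with y hy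
        simp [hy]
      exact continuousAt_const.congr this.symm
  exact hcont.integrable_of_hasCompactSupport hc.mul_right

lemma green {A : Set R2} (hA : IsOpen A) {v : R2 → R2} (hv : ContDiffOn ℝ 1 v A)
    {φ : R2 → ℝ} (hφ : ContDiff ℝ (⊤ : ℕ∞) φ)
    (hc : HasCompactSupport φ) (hs : tsupport φ ⊆ A) (i j : Fin 2) :
    Integrable (fun x => φ x * jacobianMatrix v x i j) ∧
    Integrable (fun x => fderiv ℝ φ x (ee j) * v x i) ∧
    ∫ x in A, φ x * jacobianMatrix v x i j = - ∫ x in A, fderiv ℝ φ x (ee j) * v x i := by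
  have hsf : tsupport (fun x => fderiv ℝ φ x (ee j)) ⊆ tsupport φ := tsupport_fderiv_apply_subset ℝ _
  have hcf : HasCompactSupport (fun x => fderiv ℝ φ x (ee j)) := hc.fderiv_apply ℝ _
  have hφf : Continuous (fun x => fderiv ℝ φ x (ee j)) :=
    (hφ.continuous_fderiv (by simp)).clm_apply continuous_const
  have hvi : ContinuousOn (fun x => v x i) A := by
    exact (EuclideanSpace.proj i : R2 →L[ℝ] ℝ).continuous.comp_continuousOn hv.continuousOn
  have hvd : ∀ x ∈ A, DifferentiableAt ℝ v x := fun x hx =>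
    (hv.differentiableOn (by simp)).differentiableAt (hA.mem_nhds hx)
  have hj : ∀ x ∈ A, fderiv ℝ (fun y => v y i) x (ee j) = jacobianMatrix v x i j := by
    intro x hx
    have := ((EuclideanSpace.proj i : R2 →L[ℝ] ℝ).hasFDerivAt.comp x (hvd x hx).hasFDerivAt).fderiv
    have h2 : fderiv ℝ (fun y => v y i) x = (EuclideanSpace.proj i : R2 →L[ℝ] ℝ).comp (fderiv ℝ v x) := this
    rw [h2]; rfl
  have hjc : ContinuousOn (fun x => jacobianMatrix v x i j) A := by
    have := hv.continuousOn_fderiv_of_isOpen hA le_rfl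
    exact (EuclideanSpace.proj i : R2 →L[ℝ] ℝ).continuous.comp_continuousOn
      (this.clm_apply continuousOn_const)
  have i1 := integrable_mul_of_tsupport hA hφ.continuous hc hs hjc
  have i2 := integrable_mul_of_tsupport hA hφf hcf (hsf.trans hs) hvi
  refine ⟨i1, i2, ?_⟩
  have hz : ∀ x, x ∉ A → φ x = 0 := fun x hx => image_eq_zero_of_notMem_tsupport fun h => hx (hs h)
  have hz' : ∀ x, x ∉ A → fderiv ℝ φ x (ee j) = 0 := fun x hx =>
    image_eq_zero_of_notMem_tsupport (f := fun x => fderiv ℝ φ x (ee j)) fun h => hx (hs (hsf h))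
  rw [setIntegral_eq_integral_of_forall_compl_eq_zero (fun x hx => by rw [hz x hx, zero_mul]),
    setIntegral_eq_integral_of_forall_compl_eq_zero (fun x hx => by rw [hz' x hx, zero_mul])]
  have e : (fun x => φ x * jacobianMatrix v x i j)
      = fun x => φ x * fderiv ℝ (fun y => v y i) x (ee j) := by
    ext x
    by_cases hx : x ∈ A
    · rw [hj x hx]
    · rw [hz x hx]; simp
  rw [e] at i1 ⊢
  exact integral_mul_fderiv_eq_neg_fderiv_mul_of_integrable i2 i1
    (integrable_mul_of_tsupport hA hφ.continuous hc hs hvi)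
    (fun x _ => hφ.differentiable (by simp) x)
    (fun x hx => ((EuclideanSpace.proj i : R2 →L[ℝ] ℝ).differentiableAt.comp x (hvd x (hs hx))))

end EnvA

namespace EnvA

lemma arg_deriv {z : ℂ} (hz : z ∈ Complex.slitPlane) :
    HasFDerivAt Complex.arg (Complex.imCLM.comp
      ((ContinuousLinearMap.mul ℝ ℂ) z⁻¹)) z := by
  have h1 : HasFDerivAt Complex.log ((ContinuousLinearMap.mul ℝ ℂ) z⁻¹) z := by
    have := (Complex.hasDerivAt_log hz).hasFDerivAt.restrictScalars ℝ
    have e : (ContinuousLinearMap.mul ℝ ℂ) z⁻¹ = ContinuousLinearMap.restrictScalars ℝ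
        (ContinuousLinearMap.toSpanSingleton ℂ z⁻¹) := by
      ext w <;> simp [mul_comm]
    rw [e]
    exact this
  have h2 := Complex.imCLM.hasFDerivAt.comp z h1
  have : (Complex.imCLM ∘ Complex.log) = Complex.arg := by
    ext w; simp [Complex.log_im]
  rwa [this] at h2

lemma arg_contDiffAt {z : ℂ} (hz : z ∈ Complex.slitPlane) : ContDiffAt ℝ 1 Complex.arg z := by
  have h1 : ContDiffAt ℝ 1 Complex.log z := (Complex.contDiffAt_log hz).restrict_scalars ℝ
  have h2 := Complex.imCLM.contDiff.contDiffAt.comp z h1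
  have : (Complex.imCLM ∘ Complex.log) = Complex.arg := by
    ext w; simp [Complex.log_im]
  rwa [this] at h2

lemma arg_deriv_norm {z : ℂ} (hz : ‖z‖ = 1) : ‖(Complex.imCLM.comp
      ((ContinuousLinearMap.mul ℝ ℂ) z⁻¹))‖ ≤ 1 := by
  refine ContinuousLinearMap.opNorm_le_bound _ zero_le_one fun w => ?_
  simp only [ContinuousLinearMap.comp_apply, ContinuousLinearMap.mul_apply', one_mul, Complex.imCLM_apply]
  refine (Complex.abs_im_le_norm _).trans ?_
  rw [norm_mul, norm_inv, hz, inv_one, one_mul]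

lemma exists_profile_complex : ∃ C : ℝ, 0 ≤ C ∧ ∀ δ : ℝ, 0 < δ → δ ≤ 1 / 4 →
    ∃ h : ℂ → ℝ, ContDiff ℝ 1 h ∧ (∃ L : ℝ, ∀ z, ‖fderiv ℝ h z‖ ≤ L) ∧
      ∀ z : ℂ, ‖z‖ = 1 → ‖fderiv ℝ h z‖ ≤ 1 + C / δ ∧
        (2 * δ ≤ ‖z + 1‖ → h z = Complex.arg z ∧ ‖fderiv ℝ h z‖ ≤ 1) := by
  let b0 : ContDiffBump (0 : ℂ) := ⟨1, 2, by norm_num, by norm_num⟩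
  have hb0 : ContDiff ℝ 1 b0 := b0.contDiff
  obtain ⟨C, hC⟩ := (hb0.continuous_fderiv (by simp)).bounded_above_of_compact_support
    (b0.hasCompactSupport.fderiv (𝕜 := ℝ))
  have hC0 : 0 ≤ C := (norm_nonneg _).trans (hC 0)
  refine ⟨Real.pi * C, by positivity, fun δ hδ hδ4 => ?_⟩
  -- the scaled bump
  set b : ℂ → ℝ := fun z => b0 (δ⁻¹ • (z + 1)) with hb
  have hbs : ContDiff ℝ 1 b := hb0.comp (by fun_prop)
  have hbd : ∀ z, ‖fderiv ℝ b z‖ ≤ C / δ := by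
    intro z
    have h1 : HasFDerivAt b0 (fderiv ℝ b0 (δ⁻¹ • (z + 1))) (δ⁻¹ • (z + 1)) :=
      (hb0.differentiable (by simp) _).hasFDerivAt
    have h2 : HasFDerivAt (fun z : ℂ => δ⁻¹ • (z + 1)) (δ⁻¹ • ContinuousLinearMap.id ℝ ℂ) z :=
      ((hasFDerivAt_id z).add_const 1).const_smul δ⁻¹
    have h3 : fderiv ℝ b z = (fderiv ℝ b0 (δ⁻¹ • (z + 1))).comp (δ⁻¹ • ContinuousLinearMap.id ℝ ℂ) := by
      have h4 := h1.comp z h2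
      exact h4.fderiv
    rw [h3]
    refine (ContinuousLinearMap.opNorm_comp_le _ _).trans ?_
    have : ‖δ⁻¹ • ContinuousLinearMap.id ℝ ℂ‖ ≤ δ⁻¹ := by
      rw [norm_smul, Real.norm_of_nonneg (inv_nonneg.2 hδ.le)]
      exact mul_le_of_le_one_right (inv_nonneg.2 hδ.le) ContinuousLinearMap.norm_id_le
    rw [div_eq_mul_inv]
    exact mul_le_mul (hC _) this (norm_nonneg _) hC0
  have hb01 : ∀ z, 0 ≤ b z ∧ b z ≤ 1 := fun z => ⟨b0.nonneg, b0.le_one⟩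
  have hnorm : ∀ z : ℂ, ‖δ⁻¹ • (z + 1)‖ = ‖z + 1‖ / δ := by
    intro z
    rw [norm_smul, Real.norm_of_nonneg (inv_nonneg.2 hδ.le), div_eq_inv_mul]
  have hb1 : ∀ z, ‖z + 1‖ ≤ δ → b z = 1 := by
    intro z hz
    apply b0.one_of_mem_closedBall
    rw [mem_closedBall, dist_zero_right, hnorm, div_le_iff₀ hδ]
    simpa [b0] using hz
  have hb2 : ∀ z, 2 * δ ≤ ‖z + 1‖ → b z = 0 := by
    intro z hz
    apply b0.zero_of_le_dist
    rw [dist_zero_right, hnorm, le_div_iff₀ hδ]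
    simpa [b0] using hz
  -- the radial cutoff
  let c0 : ContDiffBump (1 : ℝ) := ⟨δ / 4, δ / 2, by positivity, by linarith⟩
  set χ : ℂ → ℝ := fun z => c0 (‖z‖ ^ 2) with hχ
  have hχs : ContDiff ℝ 1 χ := c0.contDiff.comp (contDiff_norm_sq ℝ)
  have hχ1 : ∀ z : ℂ, ‖z‖ = 1 → ∀ᶠ w in 𝓝 z, χ w = 1 := by
    intro z hz
    have : Tendsto (fun w : ℂ => ‖w‖ ^ 2) (𝓝 z) (𝓝 1) := by
      have h5 : Continuous (fun w : ℂ => ‖w‖ ^ 2) := by fun_prop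
      have := h5.tendsto z
      simpa [hz] using this
    exact this.eventually (c0.eventuallyEq_one)
  have hχc : HasCompactSupport χ := by
    refine HasCompactSupport.of_support_subset_isCompact (isCompact_closedBall (0 : ℂ) 2) ?_
    intro z hz
    by_contra hcon
    apply hz
    apply c0.zero_of_le_dist
    simp only [mem_closedBall, dist_zero_right, not_le] at hcon
    rw [Real.dist_eq]
    have : (4:ℝ) < ‖z‖ ^ 2 := by nlinarith
    refine le_trans ?_ (le_abs_self _)
    show δ / 2 ≤ _
    linarith
  set h : ℂ → ℝ := fun z => χ z * ((1 - b z) * Complex.arg z) with hh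
  have hslit : ∀ z, z ∉ Complex.slitPlane → h =ᶠ[𝓝 z] fun _ => 0 := by
    intro z hz
    have hz' : z.re ≤ 0 ∧ z.im = 0 := by
      rw [Complex.mem_slitPlane_iff] at hz; push Not at hz; exact hz
    have hnz : ‖z‖ = - z.re := by
      rw [show z = ((z.re : ℝ) : ℂ) from Complex.ext rfl (by simp [hz'.2]), Complex.norm_real,
        Real.norm_of_nonpos hz'.1]; simp
    have hnz1 : ‖z + 1‖ = |z.re + 1| := by
      rw [show z + 1 = ((z.re + 1 : ℝ) : ℂ) from Complex.ext (by simp) (by simp [hz'.2]),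
        Complex.norm_real, Real.norm_eq_abs]
    by_cases hcase : |‖z‖ ^ 2 - 1| ≤ δ / 2
    · have hlt : ‖z + 1‖ < δ := by
        rw [hnz1, abs_lt]
        rw [hnz, abs_le] at hcase
        have h0 := hz'.1
        constructor <;> nlinarith
      have : ∀ᶠ w in 𝓝 z, ‖w + 1‖ < δ :=
        (continuous_norm.comp (continuous_id.add continuous_const)).continuousAt.eventually
          (gt_mem_nhds hlt)
      filter_upwards [this] with w hw
      simp [hh, hb1 w hw.le]
    · push Not at hcase
      have : ∀ᶠ w : ℂ in 𝓝 z, δ / 2 < |‖w‖ ^ 2 - 1| :=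
        (((continuous_norm.pow 2).sub continuous_const).abs).continuousAt.eventually
          (lt_mem_nhds hcase)
      filter_upwards [this] with w hw
      have : χ w = 0 := c0.zero_of_le_dist (by rw [Real.dist_eq]; exact hw.le)
      simp [hh, this]
  have hcd : ContDiff ℝ 1 h := by
    rw [contDiff_iff_contDiffAt]
    intro z
    by_cases hz : z ∈ Complex.slitPlane
    · exact hχs.contDiffAt.mul ((contDiffAt_const.sub hbs.contDiffAt).mul (arg_contDiffAt hz))
    · exact contDiffAt_const.congr_of_eventuallyEq (hslit z hz)
  have hhc : HasCompactSupport h := hχc.mul_right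
  refine ⟨h, hcd, (hcd.continuous_fderiv (by simp)).bounded_above_of_compact_support
    (hhc.fderiv (𝕜 := ℝ)), fun z hz => ?_⟩
  by_cases hzs : z ∈ Complex.slitPlane
  · have hfd : fderiv ℝ h z = (1 - b z) • (Complex.imCLM.comp ((ContinuousLinearMap.mul ℝ ℂ) z⁻¹))
        + Complex.arg z • (- fderiv ℝ b z) := by
      have e : h =ᶠ[𝓝 z] fun w => (1 - b w) * Complex.arg w := by
        filter_upwards [hχ1 z hz] with w hw
        simp [hh, hw]
      rw [e.fderiv_eq]
      have h1 : HasFDerivAt b (fderiv ℝ b z) z := (hbs.differentiable (by simp) z).hasFDerivAt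
      exact ((h1.const_sub 1).mul (arg_deriv hzs)).fderiv
    have hA : ‖(1 - b z) • (Complex.imCLM.comp ((ContinuousLinearMap.mul ℝ ℂ) z⁻¹))‖ ≤ 1 := by
      rw [norm_smul, Real.norm_of_nonneg (by linarith [(hb01 z).2])]
      have := arg_deriv_norm hz
      have h0 := norm_nonneg (Complex.imCLM.comp ((ContinuousLinearMap.mul ℝ ℂ) z⁻¹))
      nlinarith [(hb01 z).1, (hb01 z).2]
    refine ⟨?_, fun h2 => ⟨?_, ?_⟩⟩
    · rw [hfd]
      refine (norm_add_le _ _).trans (add_le_add hA ?_)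
      rw [norm_smul, norm_neg, mul_div_assoc, Real.norm_eq_abs]
      exact mul_le_mul (Complex.abs_arg_le_pi z) (hbd z) (norm_nonneg _) Real.pi_pos.le
    · simp [hh, hb2 z h2, (hχ1 z hz).self_of_nhds]
    · have : fderiv ℝ b z = 0 := by
        apply IsLocalMin.fderiv_eq_zero
        refine Eventually.of_forall fun w => ?_
        rw [hb2 z h2]; exact (hb01 w).1
      rw [hfd, this]
      simpa using hA
  · have hfd : fderiv ℝ h z = 0 := by
      rw [(hslit z hzs).fderiv_eq]; simp
    refine ⟨by rw [hfd, norm_zero]; positivity, fun h2 => ?_⟩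
    exfalso
    have hz' : z.re ≤ 0 ∧ z.im = 0 := by
      rw [Complex.mem_slitPlane_iff] at hzs; push Not at hzs; exact hzs
    have hnz : ‖z‖ = - z.re := by
      rw [show z = ((z.re : ℝ) : ℂ) from Complex.ext rfl (by simp [hz'.2]), Complex.norm_real,
        Real.norm_of_nonpos hz'.1]; simp
    have : z + 1 = 0 := Complex.ext (by simp; linarith) (by simp [hz'.2])
    rw [this, norm_zero] at h2
    linarith

/-- point on the unit circle -/
def P (t : ℝ) : R2 := !₂[Real.cos t, Real.sin t]

def iota : R2 ≃ₗᵢ[ℝ] ℂ := Complex.orthonormalBasisOneI.repr.symm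

lemma iota_P (t : ℝ) : iota (P t) = Complex.exp (t * Complex.I) := by
  have : P t = Complex.orthonormalBasisOneI.repr (Complex.exp (t * Complex.I)) := by
    ext i
    fin_cases i <;> simp [P, Complex.exp_ofReal_mul_I_re, Complex.exp_ofReal_mul_I_im]
  rw [this]; simp [iota]

lemma exists_profile : ∃ C : ℝ, 0 ≤ C ∧ ∀ γ δ : ℝ, 0 < δ → δ ≤ 1 / 4 →
    ∃ H : R2 → ℝ, ContDiff ℝ 1 H ∧ (∃ L : ℝ, ∀ z, ‖fderiv ℝ H z‖ ≤ L) ∧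
      ∀ w : R2, ‖w‖ = 1 → ‖fderiv ℝ H w‖ ≤ 1 + C / δ ∧
        (2 * δ ≤ ‖w + P γ‖ → P (γ + H w) = w ∧ ‖fderiv ℝ H w‖ ≤ 1) := by
  obtain ⟨C, hC, hmain⟩ := exists_profile_complex
  refine ⟨C, hC, fun γ δ hδ hδ4 => ?_⟩
  obtain ⟨h, hcd, ⟨L, hL⟩, hh⟩ := hmain δ hδ hδ4
  set e : ℂ := Complex.exp (-(γ * Complex.I)) with he
  have hen : ‖e‖ = 1 := by
    rw [he, ← neg_mul, ← Complex.ofReal_neg, Complex.norm_exp_ofReal_mul_I]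
  set T : R2 →L[ℝ] ℂ := ((ContinuousLinearMap.mul ℝ ℂ) e).comp
    (iota.toContinuousLinearEquiv : R2 →L[ℝ] ℂ) with hT
  have hTa : ∀ w, T w = e * iota w := fun w => rfl
  have hTn : ∀ w, ‖T w‖ = ‖w‖ := fun w => by
    rw [hTa, norm_mul, hen, one_mul, LinearIsometryEquiv.norm_map]
  have hTle : ‖T‖ ≤ 1 := ContinuousLinearMap.opNorm_le_bound _ zero_le_one fun w => by
    rw [hTn, one_mul]
  have hfd : ∀ w, fderiv ℝ (h ∘ T) w = (fderiv ℝ h (T w)).comp T := fun w =>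
    (((hcd.differentiable (by simp) (T w)).hasFDerivAt).comp w T.hasFDerivAt).fderiv
  have hfn : ∀ w, ‖fderiv ℝ (h ∘ T) w‖ ≤ ‖fderiv ℝ h (T w)‖ := fun w => by
    rw [hfd]
    refine (ContinuousLinearMap.opNorm_comp_le _ _).trans ?_
    exact mul_le_of_le_one_right (norm_nonneg _) hTle
  refine ⟨h ∘ T, hcd.comp T.contDiff, ⟨L, fun w => (hfn w).trans (hL _)⟩, fun w hw => ?_⟩
  obtain ⟨h1, h2⟩ := hh (T w) (by rw [hTn, hw])
  refine ⟨(hfn w).trans h1, fun h3 => ?_⟩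
  have hexp : Complex.exp (γ * Complex.I) * e = 1 := by
    rw [he, ← Complex.exp_add]; simp
  have hTp : T w + 1 = e * iota (w + P γ) := by
    rw [map_add, mul_add, iota_P, hTa, mul_comm e (Complex.exp _), hexp]
  obtain ⟨h4, h5⟩ := h2 (by rw [hTp, norm_mul, hen, one_mul, LinearIsometryEquiv.norm_map]; exact h3)
  refine ⟨?_, (hfn w).trans h5⟩
  apply iota.injective
  rw [iota_P, Function.comp_apply, h4, Complex.ofReal_add, add_mul, Complex.exp_add]
  have := Complex.norm_mul_exp_arg_mul_I (T w)
  rw [hTn, hw, Complex.ofReal_one, one_mul] at this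
  rw [this, hTa, ← mul_assoc, hexp, one_mul]

end EnvA

namespace EnvA

variable {Ω : Set R2} {u : R2 → R2} {G : R2 → Matrix (Fin 2) (Fin 2) ℝ}

lemma P_norm (t : ℝ) : ‖P t‖ = 1 := by
  have := iota.norm_map (P t)
  rw [iota_P, Complex.norm_exp_ofReal_mul_I] at this
  exact this.symm

def P' (t : ℝ) : R2 := !₂[-Real.sin t, Real.cos t]

lemma P_hasDerivAt (t : ℝ) : HasDerivAt P (P' t) t := by
  unfold P P'
  have h1 : HasDerivAt (fun t => ![Real.cos t, Real.sin t]) ![-Real.sin t, Real.cos t] t := by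
    rw [hasDerivAt_pi]
    intro i
    fin_cases i
    · exact Real.hasDerivAt_cos t
    · exact Real.hasDerivAt_sin t
  exact ((PiLp.continuousLinearEquiv 2 ℝ (fun _ : Fin 2 => ℝ)).symm.toContinuousLinearMap.hasFDerivAt
    (x := ![Real.cos t, Real.sin t])).comp_hasDerivAt t h1

lemma P_contDiff : ContDiff ℝ 1 P := by
  unfold P
  have h1 : ContDiff ℝ 1 (fun t => ![Real.cos t, Real.sin t]) := by
    rw [contDiff_pi]
    intro i
    fin_cases i
    · exact Real.contDiff_cos
    · exact Real.contDiff_sin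
  exact (PiLp.continuousLinearEquiv 2 ℝ (fun _ : Fin 2 => ℝ)).symm.toContinuousLinearMap.contDiff.comp h1

lemma sqrt_ineq (a b p q : ℝ) : Real.sqrt (1 + (p ^ 2 + q ^ 2)) ≤
    Real.sqrt (1 + (a ^ 2 + b ^ 2)) + (|p - a| + |q - b|) := by
  set s := Real.sqrt (1 + (a ^ 2 + b ^ 2)) with hs
  have hs2 : s ^ 2 = 1 + (a ^ 2 + b ^ 2) := Real.sq_sqrt (by positivity)
  have ha : |a| ≤ s := Real.abs_le_sqrt (by nlinarith)
  have hb : |b| ≤ s := Real.abs_le_sqrt (by nlinarith)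
  have hs0 : 0 ≤ s := Real.sqrt_nonneg _
  apply Real.sqrt_le_iff.2
  refine ⟨by positivity, ?_⟩
  have h1 : p ^ 2 = a ^ 2 + 2 * (a * (p - a)) + |p - a| ^ 2 := by rw [sq_abs]; ring
  have h2 : q ^ 2 = b ^ 2 + 2 * (b * (q - b)) + |q - b| ^ 2 := by rw [sq_abs]; ring
  have h3 : a * (p - a) ≤ s * |p - a| := by
    refine (le_abs_self _).trans ?_
    rw [abs_mul]; exact mul_le_mul_of_nonneg_right ha (abs_nonneg _)
  have h4 : b * (q - b) ≤ s * |q - b| := by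
    refine (le_abs_self _).trans ?_
    rw [abs_mul]; exact mul_le_mul_of_nonneg_right hb (abs_nonneg _)
  have h5 := mul_nonneg (abs_nonneg (p - a)) (abs_nonneg (q - b))
  nlinarith

lemma area_integrand {H : R2 → ℝ} {w : R2 → R2} (hH : ContDiff ℝ 1 H) (γ : ℝ) {x : R2}
    (hw : DifferentiableAt ℝ w x) :
    1 + (∑ i, ∑ j, (jacobianMatrix (fun x => P (γ + H (w x))) x i j) ^ 2)
      + (jacobianMatrix (fun x => P (γ + H (w x))) x).det ^ 2
    = 1 + ((fderiv ℝ H (w x) (fderiv ℝ w x (ee 0))) ^ 2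
      + (fderiv ℝ H (w x) (fderiv ℝ w x (ee 1))) ^ 2) := by
  have hHd : HasFDerivAt H (fderiv ℝ H (w x)) (w x) :=
    (hH.differentiable (by simp) _).hasFDerivAt
  have h1 := (hHd.comp x hw.hasFDerivAt).const_add γ
  have h2 := (P_hasDerivAt (γ + H (w x))).hasFDerivAt.comp x h1
  have h3 : ∀ i j, jacobianMatrix (fun x => P (γ + H (w x))) x i j
      = fderiv ℝ H (w x) (fderiv ℝ w x (ee j)) * P' (γ + H (w x)) i := by
    intro i j
    have h4 : fderiv ℝ (fun x => P (γ + H (w x))) x = _ := h2.fderiv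
    simp only [jacobianMatrix, Matrix.of_apply]
    rw [h4]
    simp
  rw [Matrix.det_fin_two]
  simp only [Fin.sum_univ_two, h3]
  simp only [P', Matrix.cons_val_zero, Matrix.cons_val_one]
  have := Real.sin_sq_add_cos_sq (γ + H (w x))
  set c := Real.cos (γ + H (w x))
  set s := Real.sin (γ + H (w x))
  set a := fderiv ℝ H (w x) (fderiv ℝ w x (ee 0))
  set b := fderiv ℝ H (w x) (fderiv ℝ w x (ee 1))
  show 1 + ((a * -s) ^ 2 + (b * -s) ^ 2 + ((a * c) ^ 2 + (b * c) ^ 2)) + (a * -s * (b * c) - b * -s * (a * c)) ^ 2 = _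
  have e : 1 + ((a * -s) ^ 2 + (b * -s) ^ 2 + ((a * c) ^ 2 + (b * c) ^ 2)) + (a * -s * (b * c) - b * -s * (a * c)) ^ 2
    = 1 + (a ^ 2 + b ^ 2) * (s ^ 2 + c ^ 2) := by ring
  rw [e, this, mul_one]

lemma Good.approx (h : Good Ω u G) {A : Set R2} (hA : IsOpen A) (hc : IsCompact (closure A))
    (hs : closure A ⊆ Ω) (γ : ℝ) {H : R2 → ℝ} (hH : ContDiff ℝ 1 H) {L : ℝ}
    (hL : ∀ z, ‖fderiv ℝ H z‖ ≤ L) {ε : ℝ≥0∞} (hε : 0 < ε) :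
    ∃ v : R2 → R2, ContDiff ℝ 1 v ∧ ∫⁻ x in A, ‖v x - P (γ + H (u x))‖ₑ ≤ ε ∧
      classicalArea A v ≤ (∫⁻ x in A, ENNReal.ofReal (Real.sqrt (1 +
        ((fderiv ℝ H (u x) (col G 0 x)) ^ 2 + (fderiv ℝ H (u x) (col G 1 x)) ^ 2)))) + ε := by
  have hL0 : 0 ≤ L := (norm_nonneg _).trans (hL 0)
  have hAΩ : A ⊆ Ω := subset_closure.trans hs
  have hAfin : volume A < ⊤ := (measure_mono hAΩ).trans_lt h.vol
  obtain ⟨r, hr, hrs⟩ := hc.exists_cthickening_subset_open h.isOpen hs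
  have hball : ∀ᶠ k : ℕ in atTop, ∀ x ∈ A, closedBall x (1 / ((k : ℝ) + 1)) ⊆ Ω := by
    have : ∀ᶠ k : ℕ in atTop, 1 / ((k : ℝ) + 1) < r :=
      tendsto_one_div_add_atTop_nhds_zero_nat.eventually (gt_mem_nhds hr)
    filter_upwards [this] with k hk x hx
    refine subset_trans ?_ hrs
    refine (closedBall_subset_closedBall hk.le).trans ?_
    exact closedBall_subset_cthickening (subset_closure hx) r
  have hDc : Continuous (fderiv ℝ H) := hH.continuous_fderiv (by simp)
  set v : ℕ → R2 → R2 := fun k x => P (γ + H (moll k u x)) with hv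
  have hvc : ∀ k, ContDiff ℝ 1 (v k) := fun k =>
    P_contDiff.comp (contDiff_const.add (hH.comp (moll_contDiff h.ui k (n := 1))))
  have hum : Measurable u := h.um
  -- (a)
  have ha : Tendsto (fun k => ∫⁻ x in A, ‖v k x - P (γ + H (u x))‖ₑ) atTop (𝓝 0) := by
    have : Tendsto (fun k => ∫⁻ x in A, ‖v k x - P (γ + H (u x))‖ₑ) atTop
        (𝓝 (∫⁻ x in A, 0)) := by
      refine tendsto_lintegral_of_dominated_convergence (fun _ => 2) ?_ ?_ ?_ ?_
      · intro k
        have h1 : Measurable (v k) := (hvc k).continuous.measurable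
        have h2 : Measurable (fun x => P (γ + H (u x))) :=
          (P_contDiff.continuous.comp (continuous_const.add hH.continuous)).measurable.comp hum
        exact (h1.sub h2).enorm
      · intro k
        refine Eventually.of_forall fun x => ?_
        refine (enorm_sub_le).trans ?_
        rw [← ofReal_norm, ← ofReal_norm, P_norm]
        simp only [hv, P_norm]
        norm_num
      · simp [hAfin.ne, ENNReal.mul_eq_top]
      · filter_upwards [ae_restrict_of_ae (moll_ae h.ui)] with x hx
        have h1 : Tendsto (fun k => v k x) atTop (𝓝 (P (γ + H (u x)))) :=
          ((P_contDiff.continuous.comp (continuous_const.add hH.continuous)).tendsto (u x)).comp hx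
        have := (h1.sub_const (P (γ + H (u x)))).enorm
        simpa using this
    simpa using this
  -- (c)
  set D : Fin 2 → ℕ → R2 → ℝ := fun j k x =>
    fderiv ℝ H (moll k u x) (moll k (col G j) x) - fderiv ℝ H (u x) (col G j x) with hD
  have hcj : ∀ j, Tendsto (fun k => ∫⁻ x in A, ENNReal.ofReal |D j k x|) atTop (𝓝 0) := by
    intro j
    have hcm : Measurable (fun x => ‖col G j x‖) := by
      have : Measurable (col G j) := by
        refine (WithLp.measurable_toLp 2 (Fin 2 → ℝ)).comp (measurable_pi_lambda _ fun i => h.Gm i j)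
      exact this.norm
    have t1 : Tendsto (fun k => ENNReal.ofReal L * ∫⁻ x, ‖moll k (col G j) x - col G j x‖ₑ) atTop
        (𝓝 0) := by
      have := ENNReal.Tendsto.const_mul (a := ENNReal.ofReal L) (moll_L1 (h.ci j))
        (Or.inr ENNReal.ofReal_ne_top)
      simpa using this
    have t2 : Tendsto (fun k => ∫⁻ x, ENNReal.ofReal
        (‖fderiv ℝ H (moll k u x) - fderiv ℝ H (u x)‖ * ‖col G j x‖)) atTop (𝓝 0) := by
      have : Tendsto (fun k => ∫⁻ x, ENNReal.ofReal
        (‖fderiv ℝ H (moll k u x) - fderiv ℝ H (u x)‖ * ‖col G j x‖)) atTop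
          (𝓝 (∫⁻ x : R2, 0)) := by
        refine tendsto_lintegral_of_dominated_convergence
          (fun x => ENNReal.ofReal (2 * L * ‖col G j x‖)) ?_ ?_ ?_ ?_
        · intro k
          have h1 : Measurable (fun x => fderiv ℝ H (moll k u x)) :=
            (hDc.comp (moll_contDiff h.ui k (n := 1)).continuous).measurable
          have h2 : Measurable (fun x => fderiv ℝ H (u x)) := hDc.measurable.comp hum
          exact ((h1.sub h2).norm.mul hcm).ennreal_ofReal
        · intro k
          refine Eventually.of_forall fun x => ENNReal.ofReal_le_ofReal ?_
          refine mul_le_mul_of_nonneg_right ?_ (norm_nonneg _)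
          refine (norm_sub_le _ _).trans ?_
          linarith [hL (moll k u x), hL (u x)]
        · exact (((h.ci j).norm.const_mul (2 * L)).lintegral_lt_top).ne
        · filter_upwards [moll_ae h.ui] with x hx
          have h1 := (((hDc.tendsto (u x)).comp hx).sub_const (fderiv ℝ H (u x))).norm.mul_const
            ‖col G j x‖
          have := ENNReal.tendsto_ofReal h1
          simpa using this
      simpa using this
    have t3 := t1.add t2
    rw [add_zero] at t3
    refine tendsto_of_tendsto_of_tendsto_of_le_of_le tendsto_const_nhds t3 (fun k => zero_le)
      fun k => ?_
    have hm1 : AEMeasurable (fun x => ‖moll k (col G j) x - col G j x‖ₑ) :=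
      ((moll_integrable (h.ci j) k).sub (h.ci j)).aestronglyMeasurable.enorm
    simp only
    rw [← lintegral_const_mul'' _ hm1, ← lintegral_add_left' (hm1.const_mul _)]
    refine (setLIntegral_le_lintegral A _).trans (lintegral_mono fun x => ?_)
    rw [← ofReal_norm, ← ENNReal.ofReal_mul hL0, ← ENNReal.ofReal_add (by positivity) (by positivity)]
    refine ENNReal.ofReal_le_ofReal ?_
    have e : D j k x = fderiv ℝ H (moll k u x) (moll k (col G j) x - col G j x)
        + (fderiv ℝ H (moll k u x) - fderiv ℝ H (u x)) (col G j x) := by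
      simp [hD]
    rw [e]
    refine (abs_add_le _ _).trans (add_le_add ?_ ?_)
    · refine ((fderiv ℝ H (moll k u x)).le_opNorm _).trans ?_
      exact mul_le_mul_of_nonneg_right (hL _) (norm_nonneg _)
    · exact (fderiv ℝ H (moll k u x) - fderiv ℝ H (u x)).le_opNorm _
  have hsum := (hcj 0).add (hcj 1)
  rw [add_zero] at hsum
  obtain ⟨k, hk1, hk2, hk3⟩ := (hball.and ((ha.eventually (gt_mem_nhds hε)).and
    (hsum.eventually (gt_mem_nhds hε)))).exists
  refine ⟨v k, hvc k, hk2.le, ?_⟩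
  have hDm : ∀ j, Measurable (fun x => ENNReal.ofReal |D j k x|) := by
    intro j
    have h1 : Measurable (fun x => fderiv ℝ H (moll k u x)) :=
      (hDc.comp (moll_contDiff h.ui k (n := 1)).continuous).measurable
    have h2 : Measurable (fun x => fderiv ℝ H (u x)) := hDc.measurable.comp hum
    have h3 : Measurable (moll k (col G j)) := (moll_contDiff (h.ci j) k (n := 1)).continuous.measurable
    have h4 : Measurable (col G j) :=
        (WithLp.measurable_toLp 2 (Fin 2 → ℝ)).comp (measurable_pi_lambda _ fun i => h.Gm i j)
    have h5 : Measurable (D j k) := by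
      have a1 : Continuous (fun p : (R2 →L[ℝ] ℝ) × R2 => p.1 p.2) := isBoundedBilinearMap_apply.continuous
      exact (a1.measurable.comp (h1.prodMk h3)).sub (a1.measurable.comp (h2.prodMk h4))
    have h6 : Measurable (fun x => |D j k x|) := continuous_abs.measurable.comp h5
    exact h6.ennreal_ofReal
  calc classicalArea A (v k)
      ≤ ∫⁻ x in A, (ENNReal.ofReal (Real.sqrt (1 +
        ((fderiv ℝ H (u x) (col G 0 x)) ^ 2 + (fderiv ℝ H (u x) (col G 1 x)) ^ 2)))
        + (ENNReal.ofReal |D 0 k x| + ENNReal.ofReal |D 1 k x|)) := by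
        unfold classicalArea
        refine setLIntegral_mono' hA.measurableSet fun x hx => ?_
        rw [← ENNReal.ofReal_add (abs_nonneg _) (abs_nonneg _),
          ← ENNReal.ofReal_add (Real.sqrt_nonneg _) (by positivity)]
        refine ENNReal.ofReal_le_ofReal ?_
        have := area_integrand (w := moll k u) hH γ (x := x)
          (((moll_contDiff h.ui k (n := 1)).differentiable (by simp)) x)
        rw [h.moll_fderiv k x (hk1 x hx), h.moll_fderiv k x (hk1 x hx)] at this
        simp only [hv]
        rw [this]
        exact sqrt_ineq _ _ _ _
    _ ≤ _ := by
        have hm : Measurable (fun x => ENNReal.ofReal |D 0 k x| + ENNReal.ofReal |D 1 k x|) :=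
          (hDm 0).add (hDm 1)
        rw [lintegral_add_right _ hm, lintegral_add_left (hDm 0)]
        exact add_le_add le_rfl hk3.le

end EnvA

namespace EnvA

variable {Ω : Set R2} {u : R2 → R2} {G : R2 → Matrix (Fin 2) (Fin 2) ℝ}

/-- the area density -/
def dens (G : R2 → Matrix (Fin 2) (Fin 2) ℝ) (x : R2) : ℝ :=
  Real.sqrt (1 + ∑ i, ∑ j, (G x i j) ^ 2)

lemma sumsq_nonneg (x : R2) : 0 ≤ ∑ i, ∑ j, (G x i j) ^ 2 :=
  Finset.sum_nonneg fun _ _ => Finset.sum_nonneg fun _ _ => sq_nonneg _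

lemma one_le_dens (x : R2) : 1 ≤ dens G x := by
  unfold dens
  rw [Real.one_le_sqrt]
  linarith [sumsq_nonneg (G := G) x]

/-- the area measure -/
def nu (Ω : Set R2) (G : R2 → Matrix (Fin 2) (Fin 2) ℝ) : Measure R2 :=
  (volume.restrict Ω).withDensity fun x => ENNReal.ofReal (dens G x)

lemma Good.dens_meas (h : Good Ω u G) : Measurable (dens G) := by
  unfold dens
  refine Real.continuous_sqrt.measurable.comp (measurable_const.add ?_)
  exact Finset.measurable_fun_sum _ fun i _ => Finset.measurable_fun_sum _ fun j _ =>
    (h.Gm i j).pow_const 2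

lemma dens_le (x : R2) : dens G x ≤ 1 + ∑ i, ∑ j, |G x i j| := by
  have h0 : 0 ≤ ∑ i, ∑ j, |G x i j| :=
    Finset.sum_nonneg fun _ _ => Finset.sum_nonneg fun _ _ => abs_nonneg _
  unfold dens
  rw [Real.sqrt_le_left (by linarith)]
  simp only [Fin.sum_univ_two] at *
  have := abs_nonneg (G x 0 0)
  have := abs_nonneg (G x 0 1)
  have := abs_nonneg (G x 1 0)
  have := abs_nonneg (G x 1 1)
  rw [← sq_abs (G x 0 0), ← sq_abs (G x 0 1), ← sq_abs (G x 1 0), ← sq_abs (G x 1 1)]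
  have e : ∀ a b c d : ℝ, 0 ≤ a → 0 ≤ b → 0 ≤ c → 0 ≤ d →
      1 + (a ^ 2 + b ^ 2 + (c ^ 2 + d ^ 2)) ≤ (1 + (a + b + (c + d))) ^ 2 := by
    intro a b c d ha hb hc hd
    have : 0 ≤ a * b := by positivity
    have : 0 ≤ a * c := by positivity
    have : 0 ≤ a * d := by positivity
    have : 0 ≤ b * c := by positivity
    have : 0 ≤ b * d := by positivity
    have : 0 ≤ c * d := by positivity
    nlinarith
  apply e <;> assumption

lemma Good.dens_int (h : Good Ω u G) : IntegrableOn (dens G) Ω := by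
  have hb : IntegrableOn (fun x => 1 + ∑ i, ∑ j, |G x i j|) Ω := by
    refine Integrable.add (integrableOn_const h.vol.ne) ?_
    exact integrable_finsetSum _ fun i _ => integrable_finsetSum _ fun j _ =>
      (h.Gi i j).integrableOn.abs
  refine Integrable.mono' hb h.dens_meas.aestronglyMeasurable (Eventually.of_forall fun x => ?_)
  rw [Real.norm_eq_abs, abs_of_nonneg (zero_le_one.trans (one_le_dens x))]
  exact dens_le x

lemma Good.nu_finite (h : Good Ω u G) : IsFiniteMeasure (nu Ω G) :=
  isFiniteMeasure_withDensity_ofReal h.dens_int.2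

lemma nu_apply (S : Set R2) (hS : MeasurableSet S) (hSΩ : S ⊆ Ω) :
    nu Ω G S = ∫⁻ x in S, ENNReal.ofReal (dens G x) := by
  unfold nu
  rw [withDensity_apply _ hS, Measure.restrict_restrict hS, inter_eq_left.2 hSΩ]

lemma vol_le_nu (S : Set R2) (hS : MeasurableSet S) (hSΩ : S ⊆ Ω) : volume S ≤ nu Ω G S := by
  rw [nu_apply S hS hSΩ]
  calc volume S = ∫⁻ x in S, 1 := by simp
    _ ≤ _ := by
      refine lintegral_mono fun x => ?_
      rw [← ENNReal.ofReal_one]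
      exact ENNReal.ofReal_le_ofReal (one_le_dens x)

lemma P_dist_sq (a b : ℝ) : ‖P a - P b‖ ^ 2 = 2 - 2 * Real.cos (a - b) := by
  rw [EuclideanSpace.norm_sq_eq]
  simp only [P, Fin.sum_univ_two, Real.norm_eq_abs, sq_abs]
  simp
  rw [Real.cos_sub]
  nlinarith [Real.sin_sq_add_cos_sq a, Real.sin_sq_add_cos_sq b]

lemma P_dist_le (a b : ℝ) : ‖P a - P b‖ ≤ |a - b| := by
  rw [← abs_of_nonneg (norm_nonneg (P a - P b))]
  apply sq_le_sq.1
  rw [P_dist_sq]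
  linarith [Real.one_sub_sq_div_two_le_cos (x := a - b)]

lemma le_P_dist (a b : ℝ) (h : |a - b| ≤ 1) : |a - b| / 2 ≤ ‖P a - P b‖ := by
  rw [← abs_of_nonneg (norm_nonneg (P a - P b)), ← abs_of_nonneg (by positivity : 0 ≤ |a - b| / 2)]
  apply sq_le_sq.1
  rw [P_dist_sq]
  have h1 := Real.cos_le_one_sub_mul_cos_sq (x := a - b) (h.trans (by linarith [Real.pi_gt_three]))
  have h2 : (1 : ℝ) / 8 ≤ 2 / Real.pi ^ 2 := by
    rw [div_le_div_iff₀ (by norm_num) (by positivity)]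
    nlinarith [Real.pi_le_four, Real.pi_pos]
  have h3 : (1 : ℝ) / 8 * (a - b) ^ 2 ≤ 2 / Real.pi ^ 2 * (a - b) ^ 2 :=
    mul_le_mul_of_nonneg_right h2 (sq_nonneg _)
  rw [div_pow, sq_abs]
  linarith

lemma sqrt_scale {a b s K : ℝ} (hK : 1 ≤ K) (h : a ^ 2 + b ^ 2 ≤ K ^ 2 * s) :
    Real.sqrt (1 + (a ^ 2 + b ^ 2)) ≤ K * Real.sqrt (1 + s) := by
  have e : K * Real.sqrt (1 + s) = Real.sqrt (K ^ 2 * (1 + s)) := by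
    rw [Real.sqrt_mul (sq_nonneg _), Real.sqrt_sq (by linarith)]
  rw [e]
  apply Real.sqrt_le_sqrt
  nlinarith

lemma DH_bound (T : R2 →L[ℝ] ℝ) {K : ℝ} (hK : 1 ≤ K) (hT : ‖T‖ ≤ K) (x : R2) :
    Real.sqrt (1 + ((T (col G 0 x)) ^ 2 + (T (col G 1 x)) ^ 2)) ≤ K * dens G x := by
  apply sqrt_scale hK
  have e : ∀ j, (T (col G j x)) ^ 2 ≤ K ^ 2 * ((G x 0 j) ^ 2 + (G x 1 j) ^ 2) := by
    intro j
    have h1 : |T (col G j x)| ≤ K * ‖col G j x‖ :=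
      (T.le_opNorm _).trans (mul_le_mul_of_nonneg_right hT (norm_nonneg _))
    have h2 : (T (col G j x)) ^ 2 ≤ (K * ‖col G j x‖) ^ 2 := by
      apply sq_le_sq.2
      rwa [abs_of_nonneg (a := K * ‖col G j x‖) (by positivity)]
    rw [mul_pow, EuclideanSpace.norm_sq_eq] at h2
    simpa [Fin.sum_univ_two] using h2
  have := e 0
  have := e 1
  simp only [Fin.sum_univ_two]
  nlinarith

lemma exists_step : ∃ C : ℝ, 0 ≤ C ∧ ∀ {Ω : Set R2} {u : R2 → R2}
    {G : R2 → Matrix (Fin 2) (Fin 2) ℝ}, Good Ω u G → ∀ {A : Set R2}, IsOpen A →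
    IsCompact (closure A) → closure A ⊆ Ω → ∀ (γ δ : ℝ), 0 < δ → δ ≤ 1 / 4 → ∀ {ε : ℝ≥0∞}, 0 < ε →
    ∃ v : R2 → R2, ContDiff ℝ 1 v ∧
      ∫⁻ x in A, ‖v x - u x‖ₑ ≤ ε + 2 * nu Ω G (A ∩ {x | ‖u x + P γ‖ < 2 * δ}) ∧
      classicalArea A v ≤ nu Ω G A +
        ENNReal.ofReal (1 + C / δ) * nu Ω G (A ∩ {x | ‖u x + P γ‖ < 2 * δ}) + ε := by
  obtain ⟨C, hC, hprof⟩ := exists_profile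
  refine ⟨C, hC, ?_⟩
  intro Ω u G h A hA hAc hAΩ γ δ hδ hδ4 ε hε
  have hAs : A ⊆ Ω := subset_closure.trans hAΩ
  obtain ⟨H, hH, ⟨L, hL⟩, hw⟩ := hprof γ δ hδ hδ4
  obtain ⟨v, hv, hv1, hv2⟩ := h.approx hA hAc hAΩ γ hH hL hε
  set arc : Set R2 := {x | ‖u x + P γ‖ < 2 * δ} with harc
  have harcm : MeasurableSet arc := by
    exact measurableSet_lt (h.um.add_const _).norm measurable_const
  refine ⟨v, hv, ?_, ?_⟩
  · have hH' : Measurable (fun x => P (γ + H (u x))) :=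
      (P_contDiff.continuous.comp (continuous_const.add hH.continuous)).measurable.comp h.um
    have hvm : Measurable v := hv.continuous.measurable
    calc ∫⁻ x in A, ‖v x - u x‖ₑ
        ≤ ∫⁻ x in A, (‖v x - P (γ + H (u x))‖ₑ + arc.indicator (fun _ => 2) x) := by
          refine setLIntegral_mono' hA.measurableSet fun x hx => ?_
          have e : v x - u x = (v x - P (γ + H (u x))) + (P (γ + H (u x)) - u x) := by abel
          rw [e]
          refine (enorm_add_le _ _).trans (add_le_add le_rfl ?_)
          by_cases hxa : x ∈ arc
          · rw [indicator_of_mem hxa]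
            refine (enorm_sub_le).trans ?_
            rw [← ofReal_norm, ← ofReal_norm, P_norm, h.u1 x (hAs hx)]
            norm_num
          · have := ((hw (u x) (h.u1 x (hAs hx))).2 (not_lt.1 hxa)).1
            simp [this]
      _ ≤ _ := by
          have hm : Measurable (fun x => ‖v x - P (γ + H (u x))‖ₑ) := (hvm.sub hH').enorm
          rw [lintegral_add_left hm, lintegral_indicator harcm,
            setLIntegral_const, Measure.restrict_apply harcm, inter_comm arc A]
          exact add_le_add hv1 (mul_le_mul_right
            (vol_le_nu _ (hA.measurableSet.inter harcm) (inter_subset_left.trans hAs)) _)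
  · refine hv2.trans (add_le_add ?_ le_rfl)
    have hdm : Measurable (fun x => ENNReal.ofReal (dens G x)) := h.dens_meas.ennreal_ofReal
    calc _ ≤ ∫⁻ x in A, (ENNReal.ofReal (dens G x) +
            arc.indicator (fun x => ENNReal.ofReal (1 + C / δ) * ENNReal.ofReal (dens G x)) x) := by
          refine setLIntegral_mono' hA.measurableSet fun x hx => ?_
          by_cases hxa : x ∈ arc
          · rw [indicator_of_mem hxa, ← ENNReal.ofReal_mul (by positivity)]
            refine le_add_left (ENNReal.ofReal_le_ofReal ?_)
            exact DH_bound _ (by have : 0 ≤ C / δ := by positivity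
                                 linarith) (hw (u x) (h.u1 x (hAs hx))).1 x
          · refine le_add_right (ENNReal.ofReal_le_ofReal ?_)
            have := DH_bound (G := G) _ le_rfl
              ((hw (u x) (h.u1 x (hAs hx))).2 (not_lt.1 hxa)).2 x
            simpa using this
      _ = _ := by
          rw [lintegral_add_left hdm, lintegral_indicator harcm,
            Measure.restrict_restrict harcm, lintegral_const_mul _ hdm, nu_apply A hA.measurableSet hAs,
            nu_apply _ (hA.measurableSet.inter harcm) (inter_subset_left.trans hAs), inter_comm arc A]

lemma pigeon (μ : Measure R2) {u : R2 → R2} (hu : Measurable u) {A : Set R2}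
    (hA : MeasurableSet A) (γ : ℝ) (k : ℕ) : ∃ γ' : ℝ,
      ((k : ℝ≥0∞) + 1) * μ (A ∩ {x | ‖u x + P γ'‖ < 2 * (1 / (16 * ((k : ℝ) + 1)))}) ≤
        μ (A ∩ {x | ‖u x + P γ‖ ≤ 1}) := by
  have hk : (0 : ℝ) < (k : ℝ) + 1 := by positivity
  let g : ℕ → ℝ := fun j => γ + j / (2 * ((k : ℝ) + 1))
  let S : ℕ → Set R2 := fun j => A ∩ {x | ‖u x + P (g j)‖ < 2 * (1 / (16 * ((k : ℝ) + 1)))}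
  have hSm : ∀ j, MeasurableSet (S j) := fun j =>
    hA.inter (measurableSet_lt (hu.add_const _).norm measurable_const)
  have hdisj : (↑(Finset.range (k + 1)) : Set ℕ).PairwiseDisjoint S := by
    intro i hi j hj hij
    rw [Function.onFun, Set.disjoint_left]
    rintro x ⟨-, hx1⟩ ⟨-, hx2⟩
    simp only [mem_ofPred_eq] at hx1 hx2
    have hi' : (i : ℝ) ≤ k := by
      have : i < k + 1 := by simpa using hi
      exact_mod_cast Nat.lt_succ_iff.1 this
    have hj' : (j : ℝ) ≤ k := by
      have : j < k + 1 := by simpa using hj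
      exact_mod_cast Nat.lt_succ_iff.1 this
    have hd : g i - g j = ((i : ℝ) - j) / (2 * ((k : ℝ) + 1)) := by
      simp only [g]; ring
    have h1 : (1 : ℝ) ≤ |(i : ℝ) - j| := by
      have : (1 : ℤ) ≤ |(i : ℤ) - j| := Int.one_le_abs (by omega)
      exact_mod_cast this
    have h2 : |(i : ℝ) - j| ≤ k := by
      rw [abs_le]
      have : (0 : ℝ) ≤ i := by positivity
      have : (0 : ℝ) ≤ j := by positivity
      constructor <;> linarith
    have hda : |g i - g j| = |(i : ℝ) - j| / (2 * ((k : ℝ) + 1)) := by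
      rw [hd, abs_div, abs_of_pos (a := 2 * ((k : ℝ) + 1)) (by positivity)]
    have h3 := le_P_dist (g i) (g j) (by
      rw [hda, div_le_one (by positivity)]; linarith)
    have h4 : ‖P (g i) - P (g j)‖ ≤ ‖u x + P (g i)‖ + ‖u x + P (g j)‖ := by
      have : P (g i) - P (g j) = (u x + P (g i)) - (u x + P (g j)) := by abel
      rw [this]; exact norm_sub_le _ _
    have h5 : 1 / (2 * ((k : ℝ) + 1)) ≤ |g i - g j| := by
      rw [hda]; gcongr
    have e1 : 2 * (1 / (16 * ((k : ℝ) + 1))) = 1 / ((k : ℝ) + 1) / 8 := by field_simp; norm_num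
    have e2 : 1 / (2 * ((k : ℝ) + 1)) = 1 / ((k : ℝ) + 1) / 2 := by field_simp
    rw [e1] at hx1 hx2
    rw [e2] at h5
    linarith
  have hsub : (⋃ j ∈ Finset.range (k + 1), S j) ⊆ A ∩ {x | ‖u x + P γ‖ ≤ 1} := by
    intro x hx
    simp only [mem_iUnion] at hx
    obtain ⟨j, hj, hxA, hx⟩ := hx
    refine ⟨hxA, ?_⟩
    simp only [mem_ofPred_eq] at hx ⊢
    have hj' : (j : ℝ) ≤ k := by
      have : j < k + 1 := by simpa using hj
      exact_mod_cast Nat.lt_succ_iff.1 this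
    have h4 : ‖u x + P γ‖ ≤ ‖u x + P (g j)‖ + ‖P (g j) - P γ‖ := by
      have : u x + P γ = (u x + P (g j)) - (P (g j) - P γ) := by abel
      rw [this]; exact norm_sub_le _ _
    have h5 := P_dist_le (g j) γ
    have h6 : |g j - γ| ≤ 1 / 2 := by
      simp only [g, add_sub_cancel_left]
      rw [abs_of_nonneg (by positivity), div_le_div_iff₀ (by positivity) (by norm_num)]
      linarith
    have h7 : 2 * (1 / (16 * ((k : ℝ) + 1))) ≤ 1 / 8 := by
      rw [mul_one_div, div_le_div_iff₀ (by positivity) (by norm_num)]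
      have : (0 : ℝ) ≤ k := by positivity
      linarith
    linarith
  obtain ⟨j, hj, hmin⟩ := Finset.exists_min_image (Finset.range (k + 1)) (fun j => μ (S j)) (by simp)
  refine ⟨g j, ?_⟩
  calc ((k : ℝ≥0∞) + 1) * μ (S j) = (Finset.range (k + 1)).card • μ (S j) := by simp
    _ ≤ ∑ i ∈ Finset.range (k + 1), μ (S i) := Finset.card_nsmul_le_sum _ _ _ hmin
    _ = μ (⋃ i ∈ Finset.range (k + 1), S i) := (measure_biUnion_finset hdisj fun i _ => hSm i).symm
    _ ≤ _ := measure_mono hsub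

lemma exists_relax : ∃ C : ℝ≥0∞, C ≠ ⊤ ∧ ∀ {Ω : Set R2} {u : R2 → R2}
    {G : R2 → Matrix (Fin 2) (Fin 2) ℝ}, Good Ω u G → ∀ {A : Set R2}, IsOpen A →
    IsCompact (closure A) → closure A ⊆ Ω → ∀ (γ : ℝ),
    relaxedArea u A ≤ nu Ω G A + C * nu Ω G (A ∩ {x | ‖u x + P γ‖ ≤ 1}) := by
  obtain ⟨C, hC, hstep⟩ := exists_step
  refine ⟨ENNReal.ofReal (1 + 16 * C), ENNReal.ofReal_ne_top, ?_⟩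
  intro Ω u G h A hA hAc hAΩ γ
  have := h.nu_finite
  have hAs : A ⊆ Ω := subset_closure.trans hAΩ
  set B := nu Ω G (A ∩ {x | ‖u x + P γ‖ ≤ 1}) with hB
  have hBt : B ≠ ⊤ := measure_ne_top _ _
  have key : ∀ k : ℕ, ∃ v : R2 → R2, ContDiff ℝ 1 v ∧
      ∫⁻ x in A, ‖v x - u x‖ₑ ≤ (1 + 2 * B) * ((k : ℝ≥0∞) + 1)⁻¹ ∧
      classicalArea A v ≤ nu Ω G A + ENNReal.ofReal (1 + 16 * C) * B + ((k : ℝ≥0∞) + 1)⁻¹ := by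
    intro k
    have hk : (0 : ℝ) < (k : ℝ) + 1 := by positivity
    have hk0 : ((k : ℝ≥0∞) + 1) ≠ 0 := by simp
    have hkt : ((k : ℝ≥0∞) + 1) ≠ ⊤ := by simp
    obtain ⟨γ', hγ⟩ := pigeon (nu Ω G) h.um hA.measurableSet γ k
    obtain ⟨v, hv, hv1, hv2⟩ := hstep h hA hAc hAΩ γ' (1 / (16 * ((k : ℝ) + 1))) (by positivity)
      (by
        rw [div_le_div_iff₀ (by positivity) (by norm_num)]
        have : (0 : ℝ) ≤ k := by positivity
        linarith) (ε := ((k : ℝ≥0∞) + 1)⁻¹) (ENNReal.inv_pos.2 hkt)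
    refine ⟨v, hv, hv1.trans ?_, hv2.trans (add_le_add (add_le_add le_rfl ?_) le_rfl)⟩
    · rw [add_mul, one_mul, mul_assoc]
      refine add_le_add le_rfl (mul_le_mul_right ?_ _)
      rw [← div_eq_mul_inv, ENNReal.le_div_iff_mul_le (Or.inl hk0) (Or.inl hkt), mul_comm]
      exact hγ
    · refine le_trans ?_ (mul_le_mul_right hγ _)
      rw [← mul_assoc]
      refine mul_le_mul_left ?_ _
      have e : ((k : ℝ≥0∞) + 1) = ENNReal.ofReal ((k : ℝ) + 1) := by
        rw [ENNReal.ofReal_add (by positivity) zero_le_one]; simp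
      rw [e, ← ENNReal.ofReal_mul (by positivity)]
      refine ENNReal.ofReal_le_ofReal ?_
      rw [div_div_eq_mul_div, div_one]
      have : (0 : ℝ) ≤ k := by positivity
      nlinarith
  choose v hv hv1 hv2 using key
  have hinv : Tendsto (fun k : ℕ => ((k : ℝ≥0∞) + 1)⁻¹) atTop (𝓝 0) := by
    have := (tendsto_add_atTop_iff_nat 1).2 ENNReal.tendsto_inv_nat_nhds_zero
    simpa using this
  have ht1 : Tendsto (fun k : ℕ => (1 + 2 * B) * ((k : ℝ≥0∞) + 1)⁻¹) atTop (𝓝 0) := by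
    have := ENNReal.Tendsto.const_mul hinv (a := 1 + 2 * B) (Or.inr (by finiteness))
    simpa using this
  have ht2 := tendsto_of_tendsto_of_tendsto_of_le_of_le tendsto_const_nhds ht1
    (fun k => zero_le) hv1
  have hmeas : ∀ k, AEStronglyMeasurable (fun x => v k x - u x) (volume.restrict A) := fun k =>
    ((hv k).continuous.measurable.sub h.um).aestronglyMeasurable
  have hle : relaxedArea u A ≤ liminf (fun k => classicalArea A (v k)) atTop := by
    refine sInf_le ⟨v, fun k => (hv k).contDiffOn, fun k => ⟨hmeas k, ?_⟩, ?_, rfl⟩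
    · refine (hv1 k).trans_lt ?_
      exact ENNReal.mul_lt_top (by finiteness) (ENNReal.inv_lt_top.2 (by positivity))
    · have : (fun k => ∫ x in A, ‖v k x - u x‖) = fun k => (∫⁻ x in A, ‖v k x - u x‖ₑ).toReal := by
        ext k
        rw [integral_norm_eq_lintegral_enorm (hmeas k)]
      rw [this]
      have h9 := (ENNReal.tendsto_toReal ENNReal.zero_ne_top).comp ht2
      rw [ENNReal.toReal_zero] at h9
      exact h9
  refine hle.trans ((liminf_le_liminf (Eventually.of_forall hv2)).trans ?_)
  have ht3 : Tendsto (fun k : ℕ => nu Ω G A + ENNReal.ofReal (1 + 16 * C) * B + ((k : ℝ≥0∞) + 1)⁻¹)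
      atTop (𝓝 (nu Ω G A + ENNReal.ofReal (1 + 16 * C) * B + 0)) := tendsto_const_nhds.add hinv
  rw [ht3.liminf_eq, add_zero]

end EnvA

namespace EnvA

variable {Ω : Set R2} {u : R2 → R2} {G : R2 → Matrix (Fin 2) (Fin 2) ℝ}

lemma relaxedArea_empty (u : R2 → R2) : relaxedArea u ∅ = 0 := by
  refine le_antisymm (sInf_le ⟨fun _ => 0, fun k => contDiffOn_const, fun k => by simp, by simp, ?_⟩)
    zero_le
  simp [classicalArea]

lemma half_pos {w : R2} (hw : ‖w‖ = 1) (h : ‖w + P 0‖ ≤ 1) : w 0 < 0 := by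
  have h1 : ‖w‖ ^ 2 = 1 := by rw [hw]; norm_num
  have h2 : ‖w + P 0‖ ^ 2 ≤ 1 := pow_le_one₀ (norm_nonneg _) h
  rw [EuclideanSpace.norm_sq_eq] at h1 h2
  simp [P, Fin.sum_univ_two] at h1 h2
  nlinarith

lemma half_neg {w : R2} (hw : ‖w‖ = 1) (h : ‖w + P Real.pi‖ ≤ 1) : 0 < w 0 := by
  have h1 : ‖w‖ ^ 2 = 1 := by rw [hw]; norm_num
  have h2 : ‖w + P Real.pi‖ ^ 2 ≤ 1 := pow_le_one₀ (norm_nonneg _) h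
  rw [EuclideanSpace.norm_sq_eq] at h1 h2
  simp [P, Fin.sum_univ_two] at h1 h2
  nlinarith

lemma envA_le_three {A B D E : Set R2} (hA : IsOpen A) (hB : IsOpen B) (hD : IsOpen D)
    (hA' : A ⊆ Ω) (hB' : B ⊆ Ω) (hD' : D ⊆ Ω) (hE : E ⊆ A ∪ B ∪ D) :
    envA u Ω E ≤ relaxedArea u A + relaxedArea u B + relaxedArea u D := by
  let S : ℕ → Set R2 := fun k => if k = 0 then A else if k = 1 then B else if k = 2 then D else ∅
  refine sInf_le ⟨S, ?_, ?_, ?_⟩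
  · intro k
    simp only [S]
    split_ifs
    · exact ⟨hA, hA'⟩
    · exact ⟨hB, hB'⟩
    · exact ⟨hD, hD'⟩
    · exact ⟨isOpen_empty, empty_subset _⟩
  · intro x hx
    rw [mem_iUnion]
    rcases hE hx with (h | h) | h
    · exact ⟨0, by simpa [S] using h⟩
    · exact ⟨1, by simpa [S] using h⟩
    · exact ⟨2, by simpa [S] using h⟩
  · rw [tsum_eq_sum (s := Finset.range 3)]
    · simp [Finset.sum_range_succ, S]
    · intro k hk
      have : 3 ≤ k := by simpa using hk
      have h0 : k ≠ 0 := by omega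
      have h1 : k ≠ 1 := by omega
      have h2 : k ≠ 2 := by omega
      simp [S, h0, h1, h2, relaxedArea_empty]

lemma Good.upper_compact (h : Good Ω u G) {E K : Set R2} (hE : MeasurableSet E)
    (hK : IsCompact K) (hEK : E ⊆ K) (hKΩ : K ⊆ Ω) : envA u Ω E ≤ nu Ω G E := by
  have := h.nu_finite
  obtain ⟨C, hC, hrel⟩ := exists_relax
  obtain ⟨W, hW, hKW, hWΩ, hWc⟩ := exists_open_between_and_isCompact_closure hK h.isOpen hKΩ
  have main : ∀ ε : ℝ≥0∞, ε ≠ 0 → envA u Ω E ≤ nu Ω G E + (3 + 6 * C) * ε := by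
    intro ε hε
    obtain ⟨V0, hEV0, hV0, hV0n⟩ := E.exists_isOpen_le_add (nu Ω G) hε
    set V := V0 ∩ W with hV
    have hVo : IsOpen V := hV0.inter hW
    have hEV : E ⊆ V := fun x hx => ⟨hEV0 hx, hKW (hEK hx)⟩
    have hcl : ∀ S : Set R2, S ⊆ V → IsCompact (closure S) ∧ closure S ⊆ Ω := by
      intro S hS
      have : closure S ⊆ closure W := closure_mono (hS.trans inter_subset_right)
      exact ⟨hWc.of_isClosed_subset isClosed_closure this, this.trans hWΩ⟩
    have hVΩ : V ⊆ Ω := subset_closure.trans (hcl V le_rfl).2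
    have hum0 : Measurable (fun x => u x 0) :=
      (EuclideanSpace.proj (0 : Fin 2) : R2 →L[ℝ] ℝ).continuous.measurable.comp h.um
    obtain ⟨K1, hK1, hK1c, hK1n⟩ := (hVo.measurableSet.inter
      (measurableSet_le measurable_const hum0 : MeasurableSet {x | 0 ≤ u x 0})).exists_isCompact_sdiff_lt
      (measure_ne_top (nu Ω G) _) hε
    obtain ⟨K2, hK2, hK2c, hK2n⟩ := (hVo.measurableSet.inter
      (measurableSet_lt hum0 measurable_const : MeasurableSet {x | u x 0 < 0})).exists_isCompact_sdiff_lt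
      (measure_ne_top (nu Ω G) _) hε
    have hdK : Disjoint K1 K2 := by
      rw [Set.disjoint_left]
      intro x h1 h2
      have e1 : 0 ≤ u x 0 := (hK1 h1).2
      have e2 : u x 0 < 0 := (hK2 h2).2
      linarith
    obtain ⟨O1, O2, hO1, hO2, hKO1, hKO2, hdO⟩ :=
      SeparatedNhds.of_isCompact_isCompact hK1c hK2c hdK
    set B := V \ (K1 ∪ K2) with hB
    have hBo : IsOpen B := hVo.sdiff (hK1c.isClosed.union hK2c.isClosed)
    have hBn : nu Ω G B ≤ 2 * ε := by
      have hs : B ⊆ ((V ∩ {x | 0 ≤ u x 0}) \ K1) ∪ ((V ∩ {x | u x 0 < 0}) \ K2) := by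
        rintro x ⟨hxV, hxK⟩
        rcases le_or_gt 0 (u x 0) with hx | hx
        · exact Or.inl ⟨⟨hxV, hx⟩, fun hh => hxK (Or.inl hh)⟩
        · exact Or.inr ⟨⟨hxV, hx⟩, fun hh => hxK (Or.inr hh)⟩
      refine (measure_mono hs).trans ((measure_union_le _ _).trans ?_)
      rw [two_mul]
      exact add_le_add hK1n.le hK2n.le
    set A1 := O1 ∩ V with hA1
    set A2 := O2 ∩ V with hA2
    have hb1 : A1 ∩ {x | ‖u x + P 0‖ ≤ 1} ⊆ B := by
      rintro x ⟨⟨hxO, hxV⟩, hx⟩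
      refine ⟨hxV, ?_⟩
      have hneg := half_pos (h.u1 x (hVΩ hxV)) hx
      rintro (hh | hh)
      · exact absurd hneg (not_lt.2 (hK1 hh).2)
      · exact Set.disjoint_left.1 hdO hxO (hKO2 hh)
    have hb2 : A2 ∩ {x | ‖u x + P Real.pi‖ ≤ 1} ⊆ B := by
      rintro x ⟨⟨hxO, hxV⟩, hx⟩
      refine ⟨hxV, ?_⟩
      have hneg := half_neg (h.u1 x (hVΩ hxV)) hx
      rintro (hh | hh)
      · exact Set.disjoint_left.1 hdO (hKO1 hh) hxO
      · exact absurd hneg (not_lt.2 (le_of_lt (hK2 hh).2))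
    have hs1 : A1 ⊆ V := inter_subset_right
    have hs2 : A2 ⊆ V := inter_subset_right
    have hs3 : B ⊆ V := sdiff_subset
    have hA1o : IsOpen A1 := hO1.inter hVo
    have hA2o : IsOpen A2 := hO2.inter hVo
    have r1 := hrel h hA1o (hcl A1 hs1).1 (hcl A1 hs1).2 0
    have r2 := hrel h hA2o (hcl A2 hs2).1 (hcl A2 hs2).2 Real.pi
    have r3 := hrel h hBo (hcl B hs3).1 (hcl B hs3).2 0
    have hcov : E ⊆ A1 ∪ A2 ∪ B := by
      intro x hx
      by_cases h1 : x ∈ K1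
      · exact Or.inl (Or.inl ⟨hKO1 h1, hEV hx⟩)
      by_cases h2 : x ∈ K2
      · exact Or.inl (Or.inr ⟨hKO2 h2, hEV hx⟩)
      exact Or.inr ⟨hEV hx, fun hh => hh.elim h1 h2⟩
    have hdA : nu Ω G A1 + nu Ω G A2 ≤ nu Ω G E + ε := by
      rw [← measure_union (hdO.mono inter_subset_left inter_subset_left) hA2o.measurableSet]
      exact (measure_mono ((union_subset hs1 hs2).trans inter_subset_left)).trans hV0n
    calc envA u Ω E ≤ relaxedArea u A1 + relaxedArea u A2 + relaxedArea u B :=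
          envA_le_three hA1o hA2o hBo (hs1.trans hVΩ) (hs2.trans hVΩ) (hs3.trans hVΩ) hcov
      _ ≤ (nu Ω G A1 + C * (2 * ε)) + (nu Ω G A2 + C * (2 * ε)) + (2 * ε + C * (2 * ε)) := by
          refine add_le_add (add_le_add (r1.trans ?_) (r2.trans ?_)) (r3.trans ?_)
          · exact add_le_add le_rfl (mul_le_mul_right ((measure_mono hb1).trans hBn) _)
          · exact add_le_add le_rfl (mul_le_mul_right ((measure_mono hb2).trans hBn) _)
          · exact add_le_add hBn (mul_le_mul_right ((measure_mono inter_subset_left).trans hBn) _)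
      _ = (nu Ω G A1 + nu Ω G A2) + (2 * ε + 6 * C * ε) := by ring
      _ ≤ (nu Ω G E + ε) + (2 * ε + 6 * C * ε) := add_le_add hdA le_rfl
      _ = _ := by ring
  have hinv : Tendsto (fun k : ℕ => ((k : ℝ≥0∞) + 1)⁻¹) atTop (𝓝 0) := by
    have := (tendsto_add_atTop_iff_nat 1).2 ENNReal.tendsto_inv_nat_nhds_zero
    simpa using this
  have ht := (tendsto_const_nhds (x := nu Ω G E) (f := (atTop : Filter ℕ))).add
    (ENNReal.Tendsto.const_mul hinv (a := 3 + 6 * C) (Or.inr (by finiteness)))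
  rw [mul_zero, add_zero] at ht
  exact ge_of_tendsto' ht fun k => main _ (ENNReal.inv_ne_zero.2 (by finiteness))

/-- set function for the outer measure -/
def mfun (u : R2 → R2) (Ω A : Set R2) : ℝ≥0∞ :=
  if IsOpen A ∧ A ⊆ Ω then relaxedArea u A else ⊤

lemma mfun_empty (u : R2 → R2) (Ω : Set R2) : mfun u Ω ∅ = 0 := by
  simp [mfun, relaxedArea_empty]

lemma envA_eq_outer (u : R2 → R2) (Ω V : Set R2) :
    envA u Ω V = OuterMeasure.ofFunction (mfun u Ω) (mfun_empty u Ω) V := by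
  rw [OuterMeasure.ofFunction_apply]
  apply le_antisymm
  · refine le_iInf fun t => le_iInf fun ht => ?_
    by_cases hg : ∀ k, IsOpen (t k) ∧ t k ⊆ Ω
    · refine sInf_le ⟨t, hg, ht, ?_⟩
      congr 1
      ext k
      rw [mfun, if_pos (hg k)]
    · push Not at hg
      obtain ⟨k, hk⟩ := hg
      have : mfun u Ω (t k) = ⊤ := by
        rw [mfun, if_neg]
        rintro ⟨h1, h2⟩
        exact hk h1 h2
      rw [ENNReal.tsum_eq_top_of_eq_top ⟨k, this⟩]
      exact le_top
  · refine le_sInf ?_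
    rintro a ⟨t, hg, ht, rfl⟩
    refine (iInf_le_of_le t (iInf_le_of_le ht (le_of_eq ?_)))
    congr 1
    ext k
    rw [mfun, if_pos (hg k)]

lemma Good.upper (h : Good Ω u G) {E : Set R2} (hE : MeasurableSet E) (hEΩ : E ⊆ Ω) :
    envA u Ω E ≤ nu Ω G E := by
  obtain ⟨F, hF, hFΩ, hFU, -⟩ := h.isOpen.exists_iUnion_isClosed
  have hdm : ∀ n, MeasurableSet (disjointed F n) := fun n =>
    MeasurableSet.disjointed (fun n => (hF n).measurableSet) n
  have hEU : E = ⋃ n, E ∩ disjointed F n := by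
    rw [← inter_iUnion, iUnion_disjointed, hFU, inter_eq_left.2 hEΩ]
  calc envA u Ω E ≤ ∑' n, envA u Ω (E ∩ disjointed F n) := by
        simp only [envA_eq_outer]
        conv_lhs => rw [hEU]
        exact measure_iUnion_le _
    _ ≤ ∑' n, nu Ω G (E ∩ disjointed F n) := by
        refine ENNReal.tsum_le_tsum fun n => ?_
        exact h.upper_compact (hE.inter (hdm n))
          (Metric.isCompact_of_isClosed_isBounded (hF n) (h.bdd.subset (hFΩ n)))
          (inter_subset_right.trans (disjointed_subset _ _)) (hFΩ n)
    _ = nu Ω G E := by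
        conv_rhs => rw [hEU]
        rw [measure_iUnion _ fun n => hE.inter (hdm n)]
        intro i j hij
        exact (disjoint_disjointed F hij).mono inter_subset_right inter_subset_right

end EnvA

namespace EnvA

variable {Ω : Set R2} {u : R2 → R2} {G : R2 → Matrix (Fin 2) (Fin 2) ℝ}

/-- target space of test fields -/
abbrev XX := EuclideanSpace ℝ (Option (Fin 2 × Fin 2))

def Fvec (M : Matrix (Fin 2) (Fin 2) ℝ) : XX :=
  WithLp.toLp 2 fun o => o.elim 1 fun p => M p.1 p.2

lemma Fvec_norm (M : Matrix (Fin 2) (Fin 2) ℝ) :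
    ‖Fvec M‖ = Real.sqrt (1 + ∑ i, ∑ j, (M i j) ^ 2) := by
  rw [EuclideanSpace.norm_eq]
  congr 1
  simp [Fvec, Fintype.sum_option, Fintype.sum_prod_type]

lemma Fvec_inner (y : XX) (M : Matrix (Fin 2) (Fin 2) ℝ) :
    inner ℝ y (Fvec M) = y none + ∑ i, ∑ j, y (some (i, j)) * M i j := by
  rw [PiLp.inner_apply]
  simp [Fvec, Fintype.sum_option, Fintype.sum_prod_type, mul_comm]

lemma ofReal_integral_le {f : R2 → ℝ} {μ : Measure R2} (hf : Integrable f μ) :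
    ENNReal.ofReal (∫ x, f x ∂μ) ≤ ∫⁻ x, ENNReal.ofReal (f x) ∂μ := by
  calc ENNReal.ofReal (∫ x, f x ∂μ) ≤ ENNReal.ofReal (∫ x, max (f x) 0 ∂μ) :=
        ENNReal.ofReal_le_ofReal (integral_mono hf hf.pos_part fun x => le_max_left _ _)
    _ = ∫⁻ x, ENNReal.ofReal (max (f x) 0) ∂μ :=
        ofReal_integral_eq_lintegral_ofReal hf.pos_part
          (Eventually.of_forall fun x => le_max_right _ _)
    _ = _ := by
        congr 1; ext x
        rcases le_total (f x) 0 with h | h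
        · simp [h, ENNReal.ofReal_of_nonpos h]
        · simp [h]

lemma area_ge {A : Set R2} {v : R2 → R2} {φ : R2 → XX} (hA : IsOpen A) (hφ : ∀ x, ‖φ x‖ ≤ 1)
    (hi : IntegrableOn (fun x => inner ℝ (φ x) (Fvec (jacobianMatrix v x))) A) :
    ENNReal.ofReal (∫ x in A, inner ℝ (φ x) (Fvec (jacobianMatrix v x))) ≤ classicalArea A v := by
  refine (ofReal_integral_le hi).trans ?_
  unfold classicalArea
  refine lintegral_mono fun x => ENNReal.ofReal_le_ofReal ?_
  refine (real_inner_le_norm _ _).trans ?_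
  refine (mul_le_of_le_one_left (norm_nonneg _) (hφ x)).trans ?_
  rw [Fvec_norm]
  apply Real.sqrt_le_sqrt
  linarith [sq_nonneg (jacobianMatrix v x).det]

lemma Good.lower_test (h : Good Ω u G) {A : Set R2} (hA : IsOpen A) (hAΩ : A ⊆ Ω)
    {φ : R2 → XX} (hφ : ContDiff ℝ (⊤ : ℕ∞) φ) (hc : HasCompactSupport φ) (hs : tsupport φ ⊆ A)
    (h1 : ∀ x, ‖φ x‖ ≤ 1) {v : ℕ → R2 → R2} (hv : ∀ k, ContDiffOn ℝ 1 (v k) A)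
    (hvi : ∀ k, IntegrableOn (fun x => v k x - u x) A)
    (hvt : Tendsto (fun k => ∫ x in A, ‖v k x - u x‖) atTop (nhds 0)) :
    ENNReal.ofReal (∫ x in A, inner ℝ (φ x) (Fvec (G x))) ≤
      liminf (fun k => classicalArea A (v k)) atTop := by
  have hco : ∀ o, ContDiff ℝ (⊤ : ℕ∞) (fun x => φ x o) := fun o =>
    (EuclideanSpace.proj o : XX →L[ℝ] ℝ).contDiff.comp hφ
  have hss : ∀ o, Function.support (fun x => φ x o) ⊆ Function.support φ := by
    intro o x hx hx'
    apply hx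
    simp [hx']
  have hts : ∀ o, tsupport (fun x => φ x o) ⊆ tsupport φ := fun o => closure_mono (hss o)
  have hcc : ∀ o, HasCompactSupport (fun x => φ x o) := fun o =>
    hc.of_isClosed_subset (isClosed_tsupport _) (hts o)
  have hi0 : Integrable (fun x => φ x none) :=
    (hco none).continuous.integrable_of_hasCompactSupport (hcc none)
  have hgr := fun k i j => green hA (hv k) (hco (some (i, j))) (hcc (some (i, j)))
    ((hts (some (i, j))).trans hs) i j
  set d : Fin 2 → Fin 2 → R2 → ℝ := fun i j x => fderiv ℝ (fun x => φ x (some (i, j))) x (ee j)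
    with hd
  have hdc : ∀ i j, Continuous (d i j) := fun i j =>
    ((hco _).continuous_fderiv (by simp)).clm_apply continuous_const
  have hdcs : ∀ i j, HasCompactSupport (d i j) := fun i j => (hcc _).fderiv_apply ℝ _
  have hdb : ∀ i j, ∃ M, ∀ x, ‖d i j x‖ ≤ M := fun i j => (hdcs i j).exists_bound_of_continuous (hdc i j)
  have hdz : ∀ i j x, x ∉ A → d i j x = 0 := by
    intro i j x hx
    have : x ∉ tsupport (fun x => d i j x) := fun hh =>
      hx (hs (hts _ (tsupport_fderiv_apply_subset ℝ _ hh)))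
    exact image_eq_zero_of_notMem_tsupport this
  have hcoord : ∀ i, Integrable (fun x => u x i) := fun i =>
    (EuclideanSpace.proj i : R2 →L[ℝ] ℝ).integrable_comp h.ui
  have hdu : ∀ i j, Integrable (fun x => d i j x * u x i) := by
    intro i j
    obtain ⟨M, hM⟩ := hdb i j
    exact (hcoord i).bdd_mul (hdc i j).aestronglyMeasurable (Eventually.of_forall hM)
  have hφG : ∀ i j, Integrable (fun x => φ x (some (i, j)) * G x i j) := by
    intro i j
    refine (h.Gi i j).bdd_mul (c := 1) (hco _).continuous.aestronglyMeasurable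
      (Eventually.of_forall fun x => ?_)
    exact (PiLp.norm_apply_le (φ x) (some (i, j))).trans (h1 x)
  -- the value for the limit
  have hlim : ∫ x in A, inner ℝ (φ x) (Fvec (G x)) =
      (∫ x in A, φ x none) + ∑ i, ∑ j, - ∫ x in A, d i j x * u x i := by
    simp only [Fvec_inner]
    rw [integral_add hi0.integrableOn (integrable_finsetSum _ fun i _ =>
      integrable_finsetSum _ fun j _ => (hφG i j).integrableOn)]
    rw [integral_finsetSum _ fun i _ => integrable_finsetSum _ fun j _ => (hφG i j).integrableOn]
    congr 1
    refine Finset.sum_congr rfl fun i _ => ?_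
    rw [integral_finsetSum _ fun j _ => (hφG i j).integrableOn]
    refine Finset.sum_congr rfl fun j _ => ?_
    have hw := h.wk' (hco (some (i, j))) (hcc _) (((hts _).trans hs).trans hAΩ) i j
    rw [setIntegral_eq_integral_of_forall_compl_eq_zero,
      setIntegral_eq_integral_of_forall_compl_eq_zero]
    · have e1 : ∫ x, φ x (some (i, j)) * G x i j = ∫ x, G x i j * φ x (some (i, j)) := by
        congr 1; ext x; ring
      have e2 : ∫ x, d i j x * u x i = ∫ x, u x i * d i j x := by
        congr 1; ext x; ring
      rw [e1, e2]
      simp only [hd]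
      rw [hw, neg_neg]
    · intro x hx
      simp [hdz i j x hx]
    · intro x hx
      have : φ x = 0 := image_eq_zero_of_notMem_tsupport fun hh => hx (hs hh)
      simp [this]
  have hki : ∀ k, IntegrableOn (fun x => inner ℝ (φ x) (Fvec (jacobianMatrix (v k) x))) A := by
    intro k
    simp only [Fvec_inner]
    exact hi0.integrableOn.add (integrable_finsetSum _ fun i _ =>
      integrable_finsetSum _ fun j _ => (hgr k i j).1.integrableOn)
  have hk : ∀ k, ∫ x in A, inner ℝ (φ x) (Fvec (jacobianMatrix (v k) x)) =
      (∫ x in A, φ x none) + ∑ i, ∑ j, - ∫ x in A, d i j x * v k x i := by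
    intro k
    simp only [Fvec_inner]
    rw [integral_add hi0.integrableOn (integrable_finsetSum _ fun i _ =>
      integrable_finsetSum _ fun j _ => (hgr k i j).1.integrableOn)]
    rw [integral_finsetSum _ fun i _ => integrable_finsetSum _ fun j _ => (hgr k i j).1.integrableOn]
    congr 1
    refine Finset.sum_congr rfl fun i _ => ?_
    rw [integral_finsetSum _ fun j _ => (hgr k i j).1.integrableOn]
    exact Finset.sum_congr rfl fun j _ => (hgr k i j).2.2
  have hconv : ∀ i j, Tendsto (fun k => ∫ x in A, d i j x * v k x i) atTop
      (𝓝 (∫ x in A, d i j x * u x i)) := by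
    intro i j
    obtain ⟨M, hM⟩ := hdb i j
    rw [tendsto_iff_norm_sub_tendsto_zero]
    have hz : Tendsto (fun k => M * ∫ x in A, ‖v k x - u x‖) atTop (𝓝 0) := by
      simpa using hvt.const_mul M
    refine squeeze_zero (fun _ => norm_nonneg _) (fun k => ?_) hz
    rw [← integral_sub (hgr k i j).2.1.integrableOn (hdu i j).integrableOn, ← integral_const_mul]
    refine norm_integral_le_of_norm_le ((hvi k).norm.const_mul M) (Eventually.of_forall fun x => ?_)
    have e : d i j x * v k x i - d i j x * u x i = d i j x * (v k x - u x) i := by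
      simp; ring
    simp only [hd] at e hM ⊢
    rw [e, norm_mul]
    exact mul_le_mul (hM x) (PiLp.norm_apply_le _ _) (norm_nonneg _) ((norm_nonneg _).trans (hM x))
  have hT : Tendsto (fun k => ENNReal.ofReal
      (∫ x in A, inner ℝ (φ x) (Fvec (jacobianMatrix (v k) x)))) atTop
      (𝓝 (ENNReal.ofReal (∫ x in A, inner ℝ (φ x) (Fvec (G x))))) := by
    refine ENNReal.tendsto_ofReal ?_
    simp only [hk, hlim]
    exact tendsto_const_nhds.add (tendsto_finsetSum _ fun i _ => tendsto_finsetSum _ fun j _ =>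
      (hconv i j).neg)
  rw [← hT.liminf_eq]
  exact liminf_le_liminf (Eventually.of_forall fun k => area_ge hA h1 (hki k))

lemma Good.lower_compact (h : Good Ω u G) {A K : Set R2} (hA : IsOpen A) (hAΩ : A ⊆ Ω)
    (hK : IsCompact K) (hKA : K ⊆ A) {a : ℝ≥0∞}
    (ha : ∀ φ : R2 → XX, ContDiff ℝ (⊤ : ℕ∞) φ → HasCompactSupport φ → tsupport φ ⊆ A →
      (∀ x, ‖φ x‖ ≤ 1) → ENNReal.ofReal (∫ x in A, inner ℝ (φ x) (Fvec (G x))) ≤ a) :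
    nu Ω G K ≤ a := by
  set ψ : R2 → XX := K.indicator fun x => (dens G x)⁻¹ • Fvec (G x) with hψ
  have hFm : Measurable (fun x => Fvec (G x)) := by
    refine (WithLp.measurable_toLp 2 (Option (Fin 2 × Fin 2) → ℝ)).comp
      (measurable_pi_lambda _ fun o => ?_)
    cases o with
    | none => exact measurable_const
    | some p => exact h.Gm p.1 p.2
  have hdpos : ∀ x, 0 < dens G x := fun x => zero_lt_one.trans_le (one_le_dens x)
  have hψm : Measurable ψ := (h.dens_meas.inv.smul hFm).indicator hK.measurableSet
  have hψ1 : ∀ x, ‖ψ x‖ ≤ 1 := by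
    intro x
    by_cases hx : x ∈ K
    · rw [hψ, indicator_of_mem hx, norm_smul, Fvec_norm, norm_inv, Real.norm_eq_abs,
        abs_of_pos (hdpos x)]
      exact (inv_mul_cancel₀ (hdpos x).ne').le
    · rw [hψ, indicator_of_notMem hx]; simp
  have hψi : Integrable ψ := by
    have : IntegrableOn ψ K := Measure.integrableOn_of_bounded hK.measure_lt_top.ne
      hψm.aestronglyMeasurable (M := 1) (Eventually.of_forall hψ1)
    refine (integrableOn_iff_integrable_of_support_subset ?_).1 this
    exact support_indicator_subset
  obtain ⟨r, hr, hrs⟩ := hK.exists_cthickening_subset_open hA hKA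
  have hsupp : ∀ m : ℕ, tsupport (moll m ψ) ⊆ cthickening (1 / ((m : ℝ) + 1)) K := by
    intro m
    refine closure_minimal ?_ isClosed_cthickening
    intro x hx
    by_contra hcon
    apply hx
    rw [moll_swap]
    refine integral_eq_zero_of_ae (Eventually.of_forall fun t => ?_)
    by_cases ht : t ∈ K
    · have : rho m (x - t) = 0 := by
        apply rho_zero
        by_contra hle
        rw [not_lt] at hle
        refine hcon (mem_cthickening_of_dist_le x t _ K ht ?_)
        rwa [dist_eq_norm]
      simp [this]
    · simp [hψ, ht]
  have hev : ∀ᶠ m : ℕ in atTop, ENNReal.ofReal (∫ x in A, inner ℝ (moll m ψ x) (Fvec (G x))) ≤ a := by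
    have : ∀ᶠ k : ℕ in atTop, 1 / ((k : ℝ) + 1) < r :=
      tendsto_one_div_add_atTop_nhds_zero_nat.eventually (gt_mem_nhds hr)
    filter_upwards [this] with m hm
    refine ha _ (moll_contDiff hψi m) ?_ (((hsupp m).trans (cthickening_mono hm.le K)).trans hrs)
      (fun x => moll_norm_le_const m x hψ1)
    exact hK.cthickening.of_isClosed_subset (isClosed_tsupport _) (hsupp m)
  have hT : Tendsto (fun m : ℕ => ∫ x in A, inner ℝ (moll m ψ x) (Fvec (G x))) atTop
      (𝓝 (∫ x in A, inner ℝ (ψ x) (Fvec (G x)))) := by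
    refine tendsto_integral_of_dominated_convergence (dens G) ?_ (h.dens_int.mono_set hAΩ) ?_ ?_
    · intro m
      exact ((moll_contDiff hψi m (n := 1)).continuous.measurable.inner hFm).aestronglyMeasurable
    · intro m
      refine Eventually.of_forall fun x => ?_
      refine (norm_inner_le_norm _ _).trans ?_
      refine (mul_le_of_le_one_left (norm_nonneg _) (moll_norm_le_const m x hψ1)).trans ?_
      rw [Fvec_norm]; rfl
    · filter_upwards [ae_restrict_of_ae (moll_ae hψi)] with x hx
      exact hx.inner tendsto_const_nhds
  have hval : ∫ x in A, inner ℝ (ψ x) (Fvec (G x)) = ∫ x in K, dens G x := by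
    have : (fun x => inner ℝ (ψ x) (Fvec (G x))) = K.indicator (dens G) := by
      ext x
      by_cases hx : x ∈ K
      · rw [hψ, indicator_of_mem hx, indicator_of_mem hx, real_inner_smul_left,
          real_inner_self_eq_norm_sq, Fvec_norm]
        change (dens G x)⁻¹ * (dens G x) ^ 2 = _
        have := (hdpos x).ne'
        field_simp
      · rw [hψ, indicator_of_notMem hx, indicator_of_notMem hx, inner_zero_left]
    rw [this, setIntegral_indicator hK.measurableSet, inter_eq_right.2 hKA]
  rw [nu_apply K hK.measurableSet (hKA.trans hAΩ), ← ofReal_integral_eq_lintegral_ofReal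
    (h.dens_int.mono_set (hKA.trans hAΩ)) (Eventually.of_forall fun x => (hdpos x).le), ← hval]
  exact le_of_tendsto (ENNReal.tendsto_ofReal hT) hev

lemma Good.lower_open (h : Good Ω u G) {A : Set R2} (hA : IsOpen A) (hAΩ : A ⊆ Ω) :
    nu Ω G A ≤ relaxedArea u A := by
  have := h.nu_finite
  rw [hA.measurableSet.measure_eq_iSup_isCompact_of_ne_top (measure_ne_top _ _)]
  refine iSup_le fun K => iSup_le fun hKA => iSup_le fun hK => ?_
  refine le_sInf ?_
  rintro a ⟨v, hv, hvi, hvt, rfl⟩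
  exact h.lower_compact hA hAΩ hK hKA fun φ h1 h2 h3 h4 =>
    h.lower_test hA hAΩ h1 h2 h3 h4 hv hvi hvt

lemma Good.env_eq (h : Good Ω u G) {E : Set R2} (hE : MeasurableSet E) (hEΩ : E ⊆ Ω) :
    envA u Ω E = nu Ω G E := by
  refine le_antisymm (h.upper hE hEΩ) (le_sInf ?_)
  rintro a ⟨A, hA, hEA, rfl⟩
  calc nu Ω G E ≤ nu Ω G (⋃ k, A k) := measure_mono hEA
    _ ≤ ∑' k, nu Ω G (A k) := measure_iUnion_le _
    _ ≤ _ := ENNReal.tsum_le_tsum fun k => h.lower_open (hA k).1 (hA k).2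

end EnvA

namespace EnvA

lemma relaxedArea_congr {Ω A : Set R2} {u u' : R2 → R2} (hA : A ⊆ Ω)
    (h : ∀ᵐ x ∂(volume.restrict Ω), u' x = u x) : relaxedArea u A = relaxedArea u' A := by
  have hA' : ∀ᵐ x ∂(volume.restrict A), u' x = u x := ae_mono (Measure.restrict_mono hA le_rfl) h
  have e1 : ∀ v : R2 → R2, (fun x => v x - u x) =ᵐ[volume.restrict A] fun x => v x - u' x := by
    intro v
    filter_upwards [hA'] with x hx
    rw [hx]
  have e2 : ∀ v : R2 → R2, IntegrableOn (fun x => v x - u x) A ↔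
      IntegrableOn (fun x => v x - u' x) A := fun v => integrable_congr (e1 v)
  have e3 : ∀ v : R2 → R2, ∫ x in A, ‖v x - u x‖ = ∫ x in A, ‖v x - u' x‖ := by
    intro v
    refine integral_congr_ae ?_
    filter_upwards [hA'] with x hx
    rw [hx]
  unfold relaxedArea
  simp only [e2, e3]

lemma envA_congr {Ω : Set R2} {u u' : R2 → R2} (V : Set R2)
    (h : ∀ᵐ x ∂(volume.restrict Ω), u' x = u x) : envA u Ω V = envA u' Ω V := by
  have e : mfun u Ω = mfun u' Ω := by
    ext A
    unfold mfun
    split_ifs with hA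
    · exact relaxedArea_congr hA.2 h
    · rfl
  rw [envA_eq_outer, envA_eq_outer]
  congr 1
  simp only [e]

lemma exists_good {Ω : Set R2} (hΩo : IsOpen Ω) (hΩb : Bornology.IsBounded Ω)
    {u : R2 → R2} {G : R2 → Matrix (Fin 2) (Fin 2) ℝ}
    (hu : MemW11 Ω u G) (hS : SphereValued Ω u) :
    ∃ u' G', Good Ω u' G' ∧ (∀ᵐ x ∂(volume.restrict Ω), u' x = u x) ∧
      ∀ᵐ x ∂(volume.restrict Ω), G' x = G x := by
  obtain ⟨hui, hGi, hwk⟩ := hu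
  set u0 := hui.aestronglyMeasurable.mk u with hu0
  have hu0m : Measurable u0 := hui.aestronglyMeasurable.stronglyMeasurable_mk.measurable
  have hu0e : u =ᵐ[volume.restrict Ω] u0 := hui.aestronglyMeasurable.ae_eq_mk
  set G0 : Fin 2 → Fin 2 → R2 → ℝ := fun i j => (hGi i j).aestronglyMeasurable.mk _ with hG0
  have hG0m : ∀ i j, Measurable (G0 i j) := fun i j =>
    (hGi i j).aestronglyMeasurable.stronglyMeasurable_mk.measurable
  have hG0e : ∀ i j, (fun x => G x i j) =ᵐ[volume.restrict Ω] G0 i j := fun i j =>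
    (hGi i j).aestronglyMeasurable.ae_eq_mk
  let u' : R2 → R2 := fun x => if x ∈ Ω then (if ‖u0 x‖ = 1 then u0 x else P 0) else 0
  let G' : R2 → Matrix (Fin 2) (Fin 2) ℝ := fun x =>
    if x ∈ Ω then Matrix.of (fun i j => G0 i j x) else 0
  have hue : ∀ᵐ x ∂(volume.restrict Ω), u' x = u x := by
    filter_upwards [hu0e, hS, ae_restrict_mem hΩo.measurableSet] with x h1 h2 h3
    simp only [u', if_pos h3]
    rw [← h1, if_pos h2]
  have hGe : ∀ᵐ x ∂(volume.restrict Ω), G' x = G x := by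
    filter_upwards [hG0e 0 0, hG0e 0 1, hG0e 1 0, hG0e 1 1, ae_restrict_mem hΩo.measurableSet]
      with x h1 h2 h3 h4 h5
    simp only [G', if_pos h5]
    ext i j
    fin_cases i <;> fin_cases j
    · exact h1.symm
    · exact h2.symm
    · exact h3.symm
    · exact h4.symm
  have hG'eq : ∀ i j, (fun x => G' x i j) = Ω.indicator (G0 i j) := by
    intro i j
    ext x
    by_cases hx : x ∈ Ω <;> simp [G', hx]
  refine ⟨u', G', ?_, hue, hGe⟩
  refine ⟨hΩo, hΩb, ?_, ?_, ?_, ?_, ?_, ?_, ?_⟩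
  · exact Measurable.ite hΩo.measurableSet
      (Measurable.ite (measurableSet_eq_fun hu0m.norm measurable_const) hu0m measurable_const)
      measurable_const
  · intro x hx
    simp only [u', if_pos hx]
    split_ifs with h1
    · exact h1
    · exact P_norm 0
  · intro x hx
    simp only [u', if_neg hx]
  · intro i j
    rw [hG'eq]
    exact (hG0m i j).indicator hΩo.measurableSet
  · intro x hx
    simp only [G', if_neg hx]
  · intro i j
    rw [hG'eq, integrable_indicator_iff hΩo.measurableSet]
    exact (integrable_congr (hG0e i j)).1 (hGi i j)
  · intro φ h1 h2 h3 i j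
    have := hwk φ h1 h2 h3 i j
    calc _ = ∫ x in Ω, u x i * fderiv ℝ φ x (EuclideanSpace.single j 1) := by
          refine integral_congr_ae ?_
          filter_upwards [hue] with x hx
          rw [hx]
      _ = _ := this
      _ = _ := by
          congr 1
          refine integral_congr_ae ?_
          filter_upwards [hGe] with x hx
          rw [hx]

lemma final {Ω : Set R2} (hΩo : IsOpen Ω) (hΩb : Bornology.IsBounded Ω)
    {u : R2 → R2} {G : R2 → Matrix (Fin 2) (Fin 2) ℝ}
    (hu : MemW11 Ω u G) (hS : SphereValued Ω u) {E : Set R2} (hE : MeasurableSet E) (hEΩ : E ⊆ Ω) :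
    envA u Ω E = ENNReal.ofReal (∫ x in E, Real.sqrt (1 + ∑ i, ∑ j, (G x i j) ^ 2)) := by
  obtain ⟨u', G', h, hue, hGe⟩ := exists_good hΩo hΩb hu hS
  rw [envA_congr E hue, h.env_eq hE hEΩ, nu_apply E hE hEΩ,
    ← ofReal_integral_eq_lintegral_ofReal (h.dens_int.mono_set hEΩ)
      (Eventually.of_forall fun x => zero_le_one.trans (one_le_dens x))]
  congr 1
  refine integral_congr_ae ?_
  filter_upwards [ae_mono (Measure.restrict_mono hEΩ le_rfl) hGe] with x hx
  rw [dens, hx]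

end EnvA

/-- **Corollary (integral representation).** For `u ∈ W^{1,1}(Ω;S¹)` and every Borel
set `E ⊆ Ω`, `𝒜**(u,E) = ∫_E √(1+|∇u|²) dx`; in particular `𝒜**(u,·)` is a Borel
measure absolutely continuous with respect to Lebesgue measure. -/
theorem envA_eq_integral_on_borel (Ω : Set R2) (hΩo : IsOpen Ω)
    (hΩb : Bornology.IsBounded Ω) (hΩc : IsConnected Ω) (hΩl : HasLipschitzBoundary Ω)
    (u : R2 → R2) (G : R2 → Matrix (Fin 2) (Fin 2) ℝ)
    (hu : MemW11 Ω u G) (hS : SphereValued Ω u) :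
    ∀ E : Set R2, MeasurableSet E → E ⊆ Ω →
      envA u Ω E = ENNReal.ofReal (∫ x in E, Real.sqrt (1 + ∑ i, ∑ j, (G x i j) ^ 2)) := by
  intro E hE hEΩ
  exact EnvA.final hΩo hΩb hu hS hE hEΩ
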